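/- arXiv:2208.00217 — 5 statements merged into one kernel-verified Lean document; each statement's English description precedes it below -/
import Mathlib

section
/- Let the group G of order two act on ℝ(t)³ by (x,y,z) ↦ (x,y,−z). Let A, B, C, D, E, F ∈ ℝ[t] be squarefree polynomials such that A, B, E have no common (non-unit) divisor and C, D, F have no common (non-unit) divisor. Then the ternary diagonal quadratic forms ⟨A,B,E⟩ and ⟨C,D,F⟩ on ℝ(t)³ are G-equivariantly equivalent (i.e. equivalent via an invertible ℝ(t)-linear map of ℝ(t)³ that commutes with the involution (x,y,z) ↦ (x,y,−z)) if and only if the binary forms ⟨A,B⟩ and ⟨C,D⟩ are equivalent over ℝ(t) and F = μ·E for some real number μ > 0. -/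
/-!
The fixed space of the involution on `ℝ(t)³` is the plane `z = 0` and its `-1`-eigenspace is the
`z`-axis, so a linear map commuting with the involution is block diagonal for the decomposition
`ℝ(t)³ = ℝ(t)² ⊕ ℝ(t)` (`equivariant_plane`, `equivariant_axis`). Hence an equivariant equivalence
of `⟨A,B,E⟩` with `⟨C,D,F⟩` is the same as an equivalence of `⟨A,B⟩` with `⟨C,D⟩` together with a
nonzero `r ∈ ℝ(t)` satisfying `E = F r²`.

It remains to see that two squarefree polynomials in the same square class of `ℝ(t)` differ by a
positive constant (`eq_C_mul_of_eq_mul_sq`). Write `r = p / q` in lowest terms, so `E q² = F p²`;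
by coprimality `p² ∣ E` and `q² ∣ F`, so `p` and `q` are nonzero constants and `F = (q / p)² E`.
Conversely, `F = μ E` with `μ > 0` gives `E = F r²` for `r = (√μ)⁻¹`.
-/


/-- The image of a real polynomial in the field `ℝ(t)` of rational functions. -/
noncomputable def toRF (p : Polynomial ℝ) : RatFunc ℝ :=
  algebraMap (Polynomial ℝ) (RatFunc ℝ) p

/-- Two binary diagonal quadratic forms `⟨a,b⟩` and `⟨c,d⟩` over `ℝ(t)` are equivalent
if there is an invertible `ℝ(t)`-linear map `T` of `ℝ(t)²` with `q₁(v) = q₂(T v)`. -/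
def BinFormEquiv (a b c d : RatFunc ℝ) : Prop :=
  ∃ T : (Fin 2 → RatFunc ℝ) ≃ₗ[RatFunc ℝ] (Fin 2 → RatFunc ℝ),
    ∀ v : Fin 2 → RatFunc ℝ,
      a * v 0 ^ 2 + b * v 1 ^ 2 = c * (T v) 0 ^ 2 + d * (T v) 1 ^ 2

/-- The involution `(x,y,z) ↦ (x,y,−z)` of `ℝ(t)³`. -/
noncomputable def invol (v : Fin 3 → RatFunc ℝ) : Fin 3 → RatFunc ℝ :=
  ![v 0, v 1, -(v 2)]

/-- Two ternary diagonal quadratic forms `⟨a,b,e⟩` and `⟨c,d,f⟩` over `ℝ(t)` are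
`G`-equivariantly equivalent (for the order-two group acting by `(x,y,z) ↦ (x,y,−z)`)
if there is an invertible `ℝ(t)`-linear map `T` of `ℝ(t)³` with `q₁(v) = q₂(T v)`
commuting with the involution. -/
def TernFormGEquiv (a b e c d f : RatFunc ℝ) : Prop :=
  ∃ T : (Fin 3 → RatFunc ℝ) ≃ₗ[RatFunc ℝ] (Fin 3 → RatFunc ℝ),
    (∀ v : Fin 3 → RatFunc ℝ,
      a * v 0 ^ 2 + b * v 1 ^ 2 + e * v 2 ^ 2 =
        c * (T v) 0 ^ 2 + d * (T v) 1 ^ 2 + f * (T v) 2 ^ 2) ∧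
    (∀ v : Fin 3 → RatFunc ℝ, T (invol v) = invol (T v))

/-- The inclusion of the plane `z = 0`, which is the fixed space of `invol`. -/
noncomputable def planeIncl : (Fin 2 → RatFunc ℝ) →ₗ[RatFunc ℝ] (Fin 3 → RatFunc ℝ) where
  toFun v := ![v 0, v 1, 0]
  map_add' v w := by ext i; fin_cases i <;> simp
  map_smul' c v := by ext i; fin_cases i <;> simp

/-- The projection `(x,y,z) ↦ (x,y)`. -/
noncomputable def planeProj : (Fin 3 → RatFunc ℝ) →ₗ[RatFunc ℝ] (Fin 2 → RatFunc ℝ) where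
  toFun v := ![v 0, v 1]
  map_add' v w := by ext i; fin_cases i <;> simp
  map_smul' c v := by ext i; fin_cases i <;> simp

lemma planeProj_planeIncl (v : Fin 2 → RatFunc ℝ) : planeProj (planeIncl v) = v := by
  ext i; fin_cases i <;> simp [planeProj, planeIncl]

lemma planeIncl_planeProj {v : Fin 3 → RatFunc ℝ} (hv : v 2 = 0) :
    planeIncl (planeProj v) = v := by
  ext i; fin_cases i <;> simp [planeProj, planeIncl, hv]

/-- An equivariant map preserves the fixed plane `z = 0`. -/
lemma equivariant_plane (T : (Fin 3 → RatFunc ℝ) →ₗ[RatFunc ℝ] (Fin 3 → RatFunc ℝ))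
    (hT : ∀ v, T (invol v) = invol (T v)) (v : Fin 2 → RatFunc ℝ) :
    T (planeIncl v) 2 = 0 := by
  have h := hT (planeIncl v)
  have hfix : invol (planeIncl v) = planeIncl v := by
    ext i; fin_cases i <;> simp [invol, planeIncl]
  rw [hfix] at h
  have h2 := congrFun h 2
  simp only [invol, Matrix.cons_val] at h2
  exact self_eq_neg.mp h2

/-- An equivariant map preserves the `z`-axis, the `-1`-eigenspace of the involution. -/
lemma equivariant_axis (T : (Fin 3 → RatFunc ℝ) →ₗ[RatFunc ℝ] (Fin 3 → RatFunc ℝ))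
    (hT : ∀ v, T (invol v) = invol (T v)) :
    T ![0, 0, 1] 0 = 0 ∧ T ![0, 0, 1] 1 = 0 := by
  have h := hT ![0, 0, 1]
  have hneg : invol ![0, 0, 1] = -![0, 0, 1] := by
    ext i; fin_cases i <;> simp [invol]
  rw [hneg, map_neg] at h
  have h0 := congrFun h 0
  have h1 := congrFun h 1
  simp only [invol, Matrix.cons_val, Pi.neg_apply] at h0 h1
  exact ⟨neg_eq_self.mp h0, neg_eq_self.mp h1⟩

/-- The automorphism of the plane `z = 0` induced by an equivariant automorphism. -/
noncomputable def planeEquiv (T : (Fin 3 → RatFunc ℝ) ≃ₗ[RatFunc ℝ] (Fin 3 → RatFunc ℝ))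
    (hT : ∀ v, T (invol v) = invol (T v)) :
    (Fin 2 → RatFunc ℝ) ≃ₗ[RatFunc ℝ] (Fin 2 → RatFunc ℝ) :=
  have hS : ∀ v, T.symm (invol v) = invol (T.symm v) := fun v => by
    rw [LinearEquiv.symm_apply_eq, hT, LinearEquiv.apply_symm_apply]
  LinearEquiv.ofLinearMap
    (planeProj ∘ₗ T.toLinearMap ∘ₗ planeIncl) (planeProj ∘ₗ T.symm.toLinearMap ∘ₗ planeIncl)
    (LinearMap.ext fun v => by
      have h := equivariant_plane T.symm.toLinearMap hS v
      simp only [LinearEquiv.coe_coe] at h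
      simp [planeIncl_planeProj h, planeProj_planeIncl])
    (LinearMap.ext fun v => by
      have h := equivariant_plane T.toLinearMap hT v
      simp only [LinearEquiv.coe_coe] at h
      simp [planeIncl_planeProj h, planeProj_planeIncl])

/-- The automorphism `(x,y,z) ↦ (T (x,y), r z)` of `ℝ(t)³`. -/
noncomputable def blockEquiv (T : (Fin 2 → RatFunc ℝ) ≃ₗ[RatFunc ℝ] (Fin 2 → RatFunc ℝ))
    (r : RatFunc ℝ) (hr : r ≠ 0) :
    (Fin 3 → RatFunc ℝ) ≃ₗ[RatFunc ℝ] (Fin 3 → RatFunc ℝ) where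
  toFun v := ![T (planeProj v) 0, T (planeProj v) 1, r * v 2]
  map_add' v w := by ext i; fin_cases i <;> simp [mul_add]
  map_smul' c v := by ext i; fin_cases i <;> simp [mul_left_comm]
  invFun v := ![T.symm (planeProj v) 0, T.symm (planeProj v) 1, r⁻¹ * v 2]
  left_inv v := by
    have h : planeProj ![T (planeProj v) 0, T (planeProj v) 1, r * v 2] = T (planeProj v) := by
      ext i; fin_cases i <;> simp [planeProj]
    ext i; fin_cases i <;> simp [h, hr] <;> simp [planeProj]
  right_inv v := by
    have h : planeProj ![T.symm (planeProj v) 0, T.symm (planeProj v) 1, r⁻¹ * v 2]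
        = T.symm (planeProj v) := by
      ext i; fin_cases i <;> simp [planeProj]
    ext i; fin_cases i <;> simp [h, hr] <;> simp [planeProj]

/-- Squarefree polynomials in the same square class of `ℝ(t)` differ by a positive constant. -/
lemma eq_C_mul_of_eq_mul_sq {E F : Polynomial ℝ} (hE : Squarefree E) (hF : Squarefree F)
    {r : RatFunc ℝ} (h : toRF E = toRF F * r ^ 2) :
    ∃ μ : ℝ, 0 < μ ∧ F = Polynomial.C μ * E := by
  have hq0 : algebraMap (Polynomial ℝ) (RatFunc ℝ) r.denom ≠ 0 :=
    RatFunc.algebraMap_ne_zero r.denom_ne_zero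
  have hcross : E * r.denom ^ 2 = F * r.num ^ 2 := by
    apply RatFunc.algebraMap_injective ℝ
    rw [← RatFunc.num_div_denom r] at h
    unfold toRF at h
    rw [div_pow, ← mul_div_assoc, eq_div_iff (pow_ne_zero 2 hq0)] at h
    simpa only [map_mul, map_pow] using h
  have hcop : IsCoprime (r.num ^ 2) (r.denom ^ 2) := r.isCoprime_num_denom.pow
  have hp : IsUnit r.num := hE _ (by
    rw [← sq]
    exact hcop.dvd_of_dvd_mul_right (hcross ▸ dvd_mul_left _ _))
  have hq : IsUnit r.denom := hF _ (by
    rw [← sq]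
    exact hcop.symm.dvd_of_dvd_mul_right (hcross ▸ dvd_mul_left _ _))
  obtain ⟨a, ha, hpa⟩ := Polynomial.isUnit_iff.mp hp
  obtain ⟨b, hb, hqb⟩ := Polynomial.isUnit_iff.mp hq
  have ha0 := ha.ne_zero
  have hb0 := hb.ne_zero
  refine ⟨(b / a) ^ 2, by positivity, ?_⟩
  rw [← hpa, ← hqb, ← Polynomial.C_pow, ← Polynomial.C_pow] at hcross
  have h1 : Polynomial.C (a ^ 2) * Polynomial.C ((a ^ 2)⁻¹) = 1 := by
    rw [← Polynomial.C_mul, mul_inv_cancel₀ (pow_ne_zero 2 ha0), Polynomial.C_1]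
  rw [div_pow, div_eq_mul_inv, Polynomial.C_mul]
  linear_combination (-F) * h1 - Polynomial.C ((a ^ 2)⁻¹) * hcross

/-- Let `A,B,C,D,E,F ∈ ℝ[t]` be squarefree polynomials with `A,B,E` having no common
non-unit divisor and `C,D,F` having no common non-unit divisor. The forms `⟨A,B,E⟩` and
`⟨C,D,F⟩` are `G`-equivariantly equivalent iff `⟨A,B⟩` and `⟨C,D⟩` are equivalent over
`ℝ(t)` and `F = μE` for some real `μ > 0`. -/
theorem stmt_1 (A B C D E F : Polynomial ℝ)
    (hA : Squarefree A) (hB : Squarefree B) (hC : Squarefree C)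
    (hD : Squarefree D) (hE : Squarefree E) (hF : Squarefree F)
    (hABE : ∀ p : Polynomial ℝ, p ∣ A → p ∣ B → p ∣ E → IsUnit p)
    (hCDF : ∀ p : Polynomial ℝ, p ∣ C → p ∣ D → p ∣ F → IsUnit p) :
    TernFormGEquiv (toRF A) (toRF B) (toRF E) (toRF C) (toRF D) (toRF F) ↔
      (BinFormEquiv (toRF A) (toRF B) (toRF C) (toRF D) ∧
        ∃ μ : ℝ, 0 < μ ∧ F = Polynomial.C μ * E) := by
  constructor
  · rintro ⟨T, hq, hT⟩
    refine ⟨⟨planeEquiv T hT, fun v => ?_⟩, ?_⟩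
    · have h := hq (planeIncl v)
      have h2 : T (planeIncl v) 2 = 0 := equivariant_plane T.toLinearMap hT v
      rw [h2] at h
      simpa [planeEquiv, planeIncl, planeProj] using h
    · obtain ⟨h0, h1⟩ := equivariant_axis T.toLinearMap hT
      simp only [LinearEquiv.coe_coe] at h0 h1
      have h := hq ![0, 0, 1]
      rw [h0, h1] at h
      exact eq_C_mul_of_eq_mul_sq hE hF (r := T ![0, 0, 1] 2) (by simpa using h)
  · rintro ⟨⟨T, hq⟩, μ, hμ, rfl⟩
    have hs : √μ ≠ 0 := (Real.sqrt_pos.mpr hμ).ne'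
    have hr : toRF (Polynomial.C (√μ)⁻¹) ≠ 0 :=
      RatFunc.algebraMap_ne_zero (Polynomial.C_ne_zero.mpr (inv_ne_zero hs))
    have hEF : toRF (Polynomial.C μ * E) * toRF (Polynomial.C (√μ)⁻¹) ^ 2 = toRF E := by
      unfold toRF
      rw [← map_pow, ← map_mul]
      congr 1
      rw [mul_right_comm, ← Polynomial.C_pow, ← Polynomial.C_mul, inv_pow, Real.sq_sqrt hμ.le,
        mul_inv_cancel₀ hμ.ne', Polynomial.C_1, one_mul]
    refine ⟨blockEquiv T _ hr, fun v => ?_, fun v => ?_⟩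
    · have h := hq (planeProj v)
      simp only [blockEquiv, LinearEquiv.coe_mk, LinearMap.coe_mk, AddHom.coe_mk,
        Matrix.cons_val]
      rw [← h, ← hEF]
      simp only [planeProj, LinearMap.coe_mk, AddHom.coe_mk, Matrix.cons_val]
      ring
    · have h : planeProj (invol v) = planeProj v := by
        ext i; fin_cases i <;> simp [planeProj, invol]
      ext i; fin_cases i <;> simp [blockEquiv, h] <;> simp [invol]
end

section
/- Let n ≥ 1 and let A₁,…,Aₙ and B₁,…,Bₙ be nonzero polynomials in ℝ[t]. The diagonal quadratic forms ⟨A₁,…,Aₙ⟩ and ⟨B₁,…,Bₙ⟩ over the field ℝ(t) are equivalent if and only if the product A₁⋯Aₙ·B₁⋯Bₙ is a square in ℝ(t) and, for all but finitely many t₀ ∈ ℝ, the number of indices i with Aᵢ(t₀) > 0 equals the number of indices i with Bᵢ(t₀) > 0 (i.e. the two forms have the same rank, the same determinant up to squares, and the same signature for almost all real values of t). -/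
/-- Two diagonal quadratic forms `⟨a₁,…,aₙ⟩` and `⟨b₁,…,bₙ⟩` over `ℝ(t)` are equivalent
if there is an invertible `ℝ(t)`-linear map `T` of `ℝ(t)ⁿ` with `q₁(v) = q₂(T v)`. -/
def DiagFormEquiv {n : ℕ} (a b : Fin n → RatFunc ℝ) : Prop :=
  ∃ T : (Fin n → RatFunc ℝ) ≃ₗ[RatFunc ℝ] (Fin n → RatFunc ℝ),
    ∀ v : Fin n → RatFunc ℝ, ∑ i, a i * v i ^ 2 = ∑ i, b i * (T v) i ^ 2

open Polynomial Filter Topology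

/-! ### Conics over `ℝ(t)` -/

/-- Isotropy of the ternary form `x² - u y² - c z²` over `ℝ(t)`, that is, triviality of the
quaternion algebra `(u, c)`. -/
def ConicIsotropic (u c : ℝ[X]) : Prop :=
  ∃ x y z : RatFunc ℝ, (x ≠ 0 ∨ y ≠ 0 ∨ z ≠ 0) ∧ x ^ 2 = toRF u * y ^ 2 + toRF c * z ^ 2

lemma toRF_ne {p : ℝ[X]} (h : p ≠ 0) : toRF p ≠ 0 := by
  unfold toRF
  exact (map_ne_zero_iff _ (RatFunc.algebraMap_injective ℝ)).2 h

lemma toRF_inj {p q : ℝ[X]} (h : toRF p = toRF q) : p = q :=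
  RatFunc.algebraMap_injective ℝ h

lemma toRF_mul (p q : ℝ[X]) : toRF (p * q) = toRF p * toRF q := map_mul _ _ _

lemma toRF_sub (p q : ℝ[X]) : toRF (p - q) = toRF p - toRF q := map_sub _ _ _

lemma toRF_neg (p : ℝ[X]) : toRF (-p) = -toRF p := map_neg _ _

lemma toRF_pow (p : ℝ[X]) (k : ℕ) : toRF (p ^ k) = toRF p ^ k := map_pow _ _ _

/-- An isotropic conic makes `c` a norm `x² - u y²`; if the isotropic vector has `z = 0`, then `u` is
a square and the norm form is a hyperbolic plane. -/
lemma ConicIsotropic.norm {u c : ℝ[X]} (hu : u ≠ 0) (h : ConicIsotropic u c) :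
    ∃ x y : RatFunc ℝ, toRF c = x ^ 2 - toRF u * y ^ 2 := by
  obtain ⟨x, y, z, hne, h⟩ := h
  have hu' := toRF_ne hu
  by_cases hz : z = 0
  · subst hz
    have hy : y ≠ 0 := by
      rintro rfl
      simp at h
      simp [h] at hne
    have hx : x ≠ 0 := by
      rintro rfl
      have : toRF u * y ^ 2 = 0 := by linear_combination -h
      simp [hu', hy] at this
    have h2 : (2 : RatFunc ℝ) ≠ 0 := two_ne_zero
    refine ⟨(toRF c + 1) / 2, (toRF c - 1) / 2 * (y / x), ?_⟩
    have : toRF u * (y / x) ^ 2 = 1 := by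
      field_simp
      linear_combination -h
    linear_combination (toRF c - 1) ^ 2 / 4 * this
  · refine ⟨x / z, y / z, ?_⟩
    field_simp
    linear_combination -h

lemma conicIsotropic_of_norm {u c : ℝ[X]} {x y : RatFunc ℝ}
    (h : toRF c = x ^ 2 - toRF u * y ^ 2) : ConicIsotropic u c :=
  ⟨x, y, 1, by simp, by linear_combination -h⟩

lemma ConicIsotropic.symm {u c : ℝ[X]} (h : ConicIsotropic u c) : ConicIsotropic c u := by
  obtain ⟨x, y, z, hne, h⟩ := h
  exact ⟨x, z, y, by tauto, by linear_combination h⟩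

lemma eventually_eval_ne {p : ℝ[X]} (h : p ≠ 0) : ∀ᶠ t in cofinite, p.eval t ≠ 0 := by
  have : {t : ℝ | p.eval t = 0}.Finite := by
    refine (p.roots.toFinset.finite_toSet).subset ?_
    intro t ht
    simpa [h] using ht
  simpa [eventually_cofinite] using this

/-- At a simple real root of `c` the polynomial `c` changes sign, so `u` cannot be negative there. -/
lemma eval_nonneg_of_root {u c : ℝ[X]} (hsq : Squarefree c) (hc : c ≠ 0)
    (h : ∀ᶠ t in cofinite, 0 < u.eval t ∨ 0 < c.eval t) {r : ℝ} (hr : c.eval r = 0) :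
    0 ≤ u.eval r := by
  by_contra! hneg
  obtain ⟨k, rfl⟩ := dvd_iff_isRoot.2 hr
  have hk : k.eval r ≠ 0 := by
    intro h0
    obtain ⟨m, rfl⟩ := dvd_iff_isRoot.2 h0
    have := hsq (X - C r) ⟨m, by ring⟩
    exact not_isUnit_X_sub_C r this
  have h1 : ∀ᶠ t in 𝓝[≠] r, 0 < u.eval t ∨ 0 < ((X - C r) * k).eval t :=
    h.filter_mono (nhdsNE_le_cofinite r)
  have h2 : ∀ᶠ t in 𝓝[≠] r, u.eval t < 0 :=
    (u.continuous.continuousAt.eventually_lt continuousAt_const hneg).filter_mono nhdsWithin_le_nhds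
  have h3 : ∀ᶠ t in 𝓝[≠] r, 0 < k.eval t * k.eval r :=
    (continuousAt_const.eventually_lt (k.continuous.mul continuous_const).continuousAt
      (mul_self_pos.2 hk)).filter_mono nhdsWithin_le_nhds
  have h4 : ∀ᶠ t in 𝓝[≠] r, 0 < (t - r) * k.eval r := by
    filter_upwards [h1, h2, h3] with t a b d
    rcases a with a | a
    · linarith
    · simp at a
      have : 0 < (t - r) * k.eval r * (k.eval t) ^ 2 := by nlinarith
      exact pos_of_mul_pos_left this (sq_nonneg _)
  have hR : ∀ᶠ t in 𝓝[>] r, 0 < (t - r) * k.eval r ∧ r < t :=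
    (h4.filter_mono (nhdsWithin_mono _ fun x (hx : r < x) => hx.ne')).and self_mem_nhdsWithin
  have hL : ∀ᶠ t in 𝓝[<] r, 0 < (t - r) * k.eval r ∧ t < r :=
    (h4.filter_mono (nhdsWithin_mono _ fun x (hx : x < r) => hx.ne)).and self_mem_nhdsWithin
  obtain ⟨s, hs, hs'⟩ := hR.exists
  obtain ⟨t, ht, ht'⟩ := hL.exists
  rcases lt_or_gt_of_ne hk with hk | hk <;> nlinarith

/-- Modulo an irreducible real polynomial, with residue field `ℝ` or `ℂ`, the only obstruction to
being a square is a negative value at a real root. -/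
lemma isSquare_mod_irreducible {u p : ℝ[X]} (hp : Irreducible p)
    (h : ∀ r : ℝ, p.eval r = 0 → 0 ≤ u.eval r) : ∃ f : ℝ[X], p ∣ f ^ 2 - u := by
  obtain ⟨z, hz⟩ := IsAlgClosed.exists_aeval_eq_zero ℂ p hp.degree_pos.ne'
  have key : ∀ f : ℝ[X], aeval z (f ^ 2 - u) = 0 → p ∣ f ^ 2 - u := by
    intro f hf
    have h1 := minpoly.eq_of_irreducible hp hz
    have h2 := minpoly.dvd ℝ z hf
    rw [← h1] at h2
    exact (dvd_mul_right _ _).trans h2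
  by_cases him : z.im = 0
  · have hz' : z = ((z.re : ℝ) : ℂ) := by
      apply Complex.ext <;> simp [him]
    have hev : ∀ g : ℝ[X], aeval z g = ((g.eval z.re : ℝ) : ℂ) := by
      intro g
      conv_lhs => rw [hz']
      exact (aeval_algebraMap_apply_eq_algebraMap_eval (A := ℂ) z.re g)
    have hr : p.eval z.re = 0 := by
      have := hev p
      rw [hz] at this
      exact_mod_cast this.symm
    refine ⟨C (Real.sqrt (u.eval z.re)), key _ ?_⟩
    rw [hev]
    simp [Real.sq_sqrt (h _ hr)]
  · obtain ⟨w, hw⟩ := IsAlgClosed.exists_pow_nat_eq (aeval z u) (n := 2) (by norm_num)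
    -- the real linear polynomial with value `w` at the non-real point `z`
    refine ⟨C (w.re - w.im / z.im * z.re) + C (w.im / z.im) * X, key _ ?_⟩
    have : aeval z (C (w.re - w.im / z.im * z.re) + C (w.im / z.im) * X) = w := by
      simp only [map_add, map_mul, aeval_C, aeval_X, Complex.coe_algebraMap]
      apply Complex.ext
      · simp
      · simp [him]
    rw [map_sub, map_pow, this, hw, sub_self]

lemma isSquare_mod_squarefree {u : ℝ[X]} (c : ℝ[X]) (hc : c ≠ 0) (hsq : Squarefree c)
    (h : ∀ r : ℝ, c.eval r = 0 → 0 ≤ u.eval r) : ∃ f : ℝ[X], c ∣ f ^ 2 - u := by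
  induction c using WfDvdMonoid.induction_on_irreducible with
  | zero => exact absurd rfl hc
  | unit v hv => exact ⟨0, hv.dvd⟩
  | mul a i ha hi ih =>
    obtain ⟨f, k, hf⟩ := ih ha (hsq.squarefree_of_dvd (dvd_mul_left _ _))
      fun r hr => h r (by simp [hr])
    obtain ⟨g, m, hg⟩ := isSquare_mod_irreducible (u := u) hi fun r hr => h r (by simp [hr])
    have hcop : IsCoprime i a := by
      rcases hi.isCoprime_or_dvd a with h1 | ⟨b, rfl⟩
      · exact h1
      · exact absurd (hsq i ⟨b, by ring⟩) hi.not_isUnit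
    obtain ⟨s, t, hst⟩ := hcop
    refine ⟨f * (s * i) + g * (t * a), IsCoprime.mul_dvd ⟨s, t, hst⟩ ?_ ?_⟩
    · refine ⟨f ^ 2 * s ^ 2 * i + 2 * f * g * s * t * a + m - g ^ 2 * s * (1 + t * a), ?_⟩
      linear_combination hg + (1 + t * a) * g ^ 2 * hst
    · refine ⟨g ^ 2 * t ^ 2 * a + 2 * f * g * s * t * i + k - f ^ 2 * t * (1 + s * i), ?_⟩
      linear_combination hf + (1 + s * i) * f ^ 2 * hst

/-- Local-global principle for conics over `ℝ(t)`, by Legendre's descent on the degrees: if `c` is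
squarefree of degree at least that of `u`, solve `f² ≡ u` modulo `c` and pass from `c` to
`(f² - u) / c`. -/
lemma conicIsotropic_of_local (N : ℕ) : ∀ u c : ℝ[X], u ≠ 0 → c ≠ 0 →
    u.natDegree + c.natDegree = N →
    (∀ᶠ t in cofinite, 0 < u.eval t ∨ 0 < c.eval t) → ConicIsotropic u c := by
  induction N using Nat.strong_induction_on with
  | _ N ih =>
  intro u c hu hc hN hloc
  wlog hdeg : u.natDegree ≤ c.natDegree generalizing u c
  · exact (this c u hc hu (by omega) (hloc.mono fun t ht => ht.symm) (by omega)).symm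
  rcases Nat.eq_zero_or_pos c.natDegree with h0 | hpos
  · obtain ⟨a, rfl⟩ := natDegree_eq_zero.1 h0
    obtain ⟨b, rfl⟩ := natDegree_eq_zero.1 (Nat.le_zero.1 (h0 ▸ hdeg))
    obtain ⟨t, ht⟩ := hloc.exists
    simp only [eval_C] at ht
    rcases ht with ht | ht
    · refine ⟨toRF (C (Real.sqrt b)), 1, 0, by simp, ?_⟩
      rw [← toRF_pow, ← C_pow, Real.sq_sqrt ht.le]
      ring
    · refine ⟨toRF (C (Real.sqrt a)), 0, 1, by simp, ?_⟩
      rw [← toRF_pow, ← C_pow, Real.sq_sqrt ht.le]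
      ring
  by_cases hsq : Squarefree c
  · obtain ⟨f₀, hf₀⟩ := isSquare_mod_squarefree c hc hsq
      fun r hr => eval_nonneg_of_root hsq hc hloc hr
    have hf : c ∣ (f₀ % c) ^ 2 - u := by
      have h1 : f₀ % c = f₀ - c * (f₀ / c) := by
        rw [eq_sub_iff_add_eq]
        exact EuclideanDomain.mod_add_div f₀ c
      obtain ⟨k, hk⟩ := hf₀
      exact ⟨k - 2 * f₀ * (f₀ / c) + c * (f₀ / c) ^ 2, by
        rw [h1]; linear_combination hk⟩
    have hfd : (f₀ % c).natDegree < c.natDegree := natDegree_mod_lt _ hpos.ne'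
    generalize f₀ % c = f at hf hfd
    obtain ⟨g, hg⟩ := hf
    have hgK : toRF c * toRF g = toRF f ^ 2 - toRF u := by
      rw [← toRF_mul, ← hg, toRF_sub, toRF_pow]
    by_cases hg0 : g = 0
    · refine ⟨toRF f, 1, 0, by simp, ?_⟩
      have : toRF g = 0 := by simp [hg0, toRF]
      rw [this] at hgK
      linear_combination -hgK
    have hgd : g.natDegree < c.natDegree := by
      have h1 : (c * g).natDegree = c.natDegree + g.natDegree := natDegree_mul hc hg0
      have h2 := natDegree_sub_le (f ^ 2) u
      rw [hg, h1, natDegree_pow] at h2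
      omega
    have hgloc : ∀ᶠ t in cofinite, 0 < u.eval t ∨ 0 < g.eval t := by
      filter_upwards [hloc, eventually_eval_ne hu] with t ht hut
      by_cases hup : 0 < u.eval t
      · exact Or.inl hup
      right
      have hun : u.eval t < 0 := lt_of_le_of_ne (not_lt.1 hup) hut
      have hct : 0 < c.eval t := ht.resolve_left hup
      have := congrArg (eval t) hg
      simp only [eval_sub, eval_pow, eval_mul] at this
      have h5 : 0 < c.eval t * g.eval t := by nlinarith [sq_nonneg (f.eval t)]
      exact pos_of_mul_pos_right h5 hct.le
    obtain ⟨x, y, hxy⟩ := (ih _ (by omega) u g hu hg0 rfl hgloc).norm hu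
    have hg' := toRF_ne hg0
    -- norms from `ℝ(t)(√u)` form a group, and both `c g` and `g` are norms
    refine conicIsotropic_of_norm (x := (toRF f * x + toRF u * y) / toRF g)
      (y := (toRF f * y + x) / toRF g) ?_
    field_simp
    linear_combination toRF g * hgK + (toRF f ^ 2 - toRF u) * hxy
  · unfold Squarefree at hsq
    push Not at hsq
    obtain ⟨p, ⟨k, rfl⟩, hpu⟩ := hsq
    have hp0 : p ≠ 0 := by rintro rfl; simp at hc
    have hk0 : k ≠ 0 := by rintro rfl; simp at hc
    have hpd : 0 < p.natDegree := by
      refine Nat.pos_of_ne_zero fun h => hpu ?_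
      rw [isUnit_iff_degree_eq_zero, degree_eq_natDegree hp0, h]; rfl
    have hd : (p * p * k).natDegree = p.natDegree + p.natDegree + k.natDegree := by
      rw [natDegree_mul (mul_ne_zero hp0 hp0) hk0, natDegree_mul hp0 hp0]
    have hkloc : ∀ᶠ t in cofinite, 0 < u.eval t ∨ 0 < k.eval t := by
      filter_upwards [hloc] with t ht
      refine ht.imp_right fun h => ?_
      rw [eval_mul, eval_mul] at h
      exact pos_of_mul_pos_right h (mul_self_nonneg _)
    obtain ⟨x, y, hxy⟩ := (ih _ (by omega) u k hu hk0 rfl hkloc).norm hu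
    refine conicIsotropic_of_norm (x := toRF p * x) (y := toRF p * y) ?_
    rw [toRF_mul, toRF_mul]
    linear_combination toRF p ^ 2 * hxy

/-! ### Polynomials with prescribed signs -/

/-- Induction along a real factorization into linear factors and factors of constant sign. -/
lemma sign_factor_induction {P : ℝ[X] → Prop} (hpos : ∀ p : ℝ[X], (∀ t, 0 < p.eval t) → P p)
    (hneg : ∀ p : ℝ[X], (∀ t, p.eval t < 0) → P p) (hlin : ∀ r : ℝ, P (X - C r))
    (hmul : ∀ p q : ℝ[X], p ≠ 0 → q ≠ 0 → P p → P q → P (p * q)) (p : ℝ[X]) (hp : p ≠ 0) : P p := by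
  induction hN : p.natDegree using Nat.strong_induction_on generalizing p with
  | _ N ih =>
  by_cases hroot : ∃ r, p.IsRoot r
  · obtain ⟨r, hr⟩ := hroot
    obtain ⟨q, rfl⟩ := dvd_iff_isRoot.2 hr
    have hq : q ≠ 0 := by rintro rfl; simp at hp
    refine hmul _ _ (X_sub_C_ne_zero r) hq (hlin r) (ih q.natDegree ?_ q hq rfl)
    rw [← hN, natDegree_mul (X_sub_C_ne_zero r) hq, natDegree_X_sub_C]
    omega
  · by_cases h1 : ∀ t, 0 < p.eval t
    · exact hpos p h1
    by_cases h2 : ∀ t, p.eval t < 0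
    · exact hneg p h2
    push Not at h1 h2
    exact absurd (mem_range_of_exists_le_of_exists_ge p.continuous h1 h2) hroot

lemma mul_neg_iff_xor {x y : ℝ} (hx : x ≠ 0) (hy : y ≠ 0) : x * y < 0 ↔ ¬(x < 0 ↔ y < 0) := by
  rcases lt_or_gt_of_ne hx with h | h <;> rcases lt_or_gt_of_ne hy with h' | h' <;>
    simp [h', h'.le, mul_neg_iff, h, h.le, not_lt.2]

/-- The induction step for the next lemma: intersection of sets distributes over symmetric
difference, and the negativity set of a product is a symmetric difference. -/
lemma exists_neg_inter_mul {a a' b : ℝ[X]} (ha : a ≠ 0) (ha' : a' ≠ 0)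
    (h : ∃ e : ℝ[X], e ≠ 0 ∧ ∀ᶠ t in cofinite, e.eval t < 0 ↔ a.eval t < 0 ∧ b.eval t < 0)
    (h' : ∃ e : ℝ[X], e ≠ 0 ∧ ∀ᶠ t in cofinite, e.eval t < 0 ↔ a'.eval t < 0 ∧ b.eval t < 0) :
    ∃ e : ℝ[X], e ≠ 0 ∧ ∀ᶠ t in cofinite, e.eval t < 0 ↔ (a * a').eval t < 0 ∧ b.eval t < 0 := by
  obtain ⟨e, he, h⟩ := h
  obtain ⟨e', he', h'⟩ := h'
  refine ⟨e * e', mul_ne_zero he he', ?_⟩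
  filter_upwards [h, h', eventually_eval_ne he, eventually_eval_ne he', eventually_eval_ne ha,
    eventually_eval_ne ha'] with t h1 h2 h3 h4 h5 h6
  rw [eval_mul, eval_mul, mul_neg_iff_xor h3 h4, mul_neg_iff_xor h5 h6, h1, h2]
  tauto

/-- Up to finite sets, the sets `{p < 0}` are stable under intersection. -/
lemma exists_neg_inter (a b : ℝ[X]) (ha : a ≠ 0) (hb : b ≠ 0) :
    ∃ e : ℝ[X], e ≠ 0 ∧ ∀ᶠ t in cofinite, e.eval t < 0 ↔ a.eval t < 0 ∧ b.eval t < 0 := by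
  have swap : ∀ {a b : ℝ[X]},
      (∃ e : ℝ[X], e ≠ 0 ∧ ∀ᶠ t in cofinite, e.eval t < 0 ↔ a.eval t < 0 ∧ b.eval t < 0) →
      ∃ e : ℝ[X], e ≠ 0 ∧ ∀ᶠ t in cofinite, e.eval t < 0 ↔ b.eval t < 0 ∧ a.eval t < 0 := by
    rintro a b ⟨e, he, h⟩
    exact ⟨e, he, h.mono fun t ht => by rw [ht, and_comm]⟩
  have definite_pos : ∀ p b : ℝ[X], (∀ t, 0 < p.eval t) →
      ∃ e : ℝ[X], e ≠ 0 ∧ ∀ᶠ t in cofinite, e.eval t < 0 ↔ p.eval t < 0 ∧ b.eval t < 0 := by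
    intro p b hp
    refine ⟨1, one_ne_zero, Eventually.of_forall fun t => ?_⟩
    simp [(hp t).le, not_lt.2, zero_le_one]
  have definite_neg : ∀ p b : ℝ[X], b ≠ 0 → (∀ t, p.eval t < 0) →
      ∃ e : ℝ[X], e ≠ 0 ∧ ∀ᶠ t in cofinite, e.eval t < 0 ↔ p.eval t < 0 ∧ b.eval t < 0 := by
    intro p b hb hp
    exact ⟨b, hb, Eventually.of_forall fun t => by simp [hp t]⟩
  refine sign_factor_induction (P := fun a => ∃ e : ℝ[X], e ≠ 0 ∧
    ∀ᶠ t in cofinite, e.eval t < 0 ↔ a.eval t < 0 ∧ b.eval t < 0)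
    (fun p hp => definite_pos p b hp) (fun p hp => definite_neg p b hb hp) (fun r => ?_)
    (fun p q hp hq h h' => exists_neg_inter_mul hp hq h h') a ha
  refine swap (sign_factor_induction (P := fun b => ∃ e : ℝ[X], e ≠ 0 ∧
    ∀ᶠ t in cofinite, e.eval t < 0 ↔ b.eval t < 0 ∧ (X - C r).eval t < 0)
    (fun p hp => definite_pos p _ hp)
    (fun p hp => definite_neg p _ (X_sub_C_ne_zero r) hp) (fun s => ?_)
    (fun p q hp hq h h' => exists_neg_inter_mul hp hq h h') b hb)
  refine ⟨X - C (min s r), X_sub_C_ne_zero _, Eventually.of_forall fun t => ?_⟩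
  simp [sub_neg]

/-- There is a polynomial whose sign at almost every point is the majority of the signs of
`a`, `b`, `c`: majority is the symmetric difference of the three pairwise intersections. -/
lemma exists_majority (a b c : ℝ[X]) (ha : a ≠ 0) (hb : b ≠ 0) (hc : c ≠ 0) :
    ∃ e : ℝ[X], e ≠ 0 ∧ ∀ᶠ t in cofinite, e.eval t < 0 ↔
      (a.eval t < 0 ∧ b.eval t < 0) ∨ (a.eval t < 0 ∧ c.eval t < 0) ∨
        (b.eval t < 0 ∧ c.eval t < 0) := by
  obtain ⟨x, hx, h1⟩ := exists_neg_inter a b ha hb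
  obtain ⟨y, hy, h2⟩ := exists_neg_inter a c ha hc
  obtain ⟨z, hz, h3⟩ := exists_neg_inter b c hb hc
  have majority_prop : ∀ p q r : Prop, ¬(¬(p ∧ q ↔ p ∧ r) ↔ q ∧ r) ↔
      (p ∧ q) ∨ (p ∧ r) ∨ (q ∧ r) := by
    intro p q r
    by_cases p <;> by_cases q <;> by_cases r <;> simp [*]
  refine ⟨x * y * z, mul_ne_zero (mul_ne_zero hx hy) hz, ?_⟩
  filter_upwards [h1, h2, h3, eventually_eval_ne hx, eventually_eval_ne hy,
    eventually_eval_ne hz] with t h1 h2 h3 hx hy hz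
  rw [eval_mul, eval_mul, mul_neg_iff_xor (mul_ne_zero hx hy) hz, mul_neg_iff_xor hx hy, h1, h2, h3]
  exact majority_prop _ _ _

/-! ### Equivalence of diagonal forms and represented values -/

/-- Equivalence over `ℝ(t)` of diagonal forms with polynomial entries. -/
def PolyFormEquiv {n : ℕ} (A B : Fin n → ℝ[X]) : Prop :=
  DiagFormEquiv (fun i => toRF (A i)) (fun i => toRF (B i))

lemma PolyFormEquiv.refl {n : ℕ} (A : Fin n → ℝ[X]) : PolyFormEquiv A A :=
  ⟨LinearEquiv.refl _ _, fun _ => rfl⟩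

lemma PolyFormEquiv.symm {n : ℕ} {A B : Fin n → ℝ[X]} (h : PolyFormEquiv A B) :
    PolyFormEquiv B A := by
  obtain ⟨T, hT⟩ := h
  exact ⟨T.symm, fun v => by simpa using (hT (T.symm v)).symm⟩

lemma PolyFormEquiv.trans {n : ℕ} {A B D : Fin n → ℝ[X]} (h : PolyFormEquiv A B)
    (h' : PolyFormEquiv B D) : PolyFormEquiv A D := by
  obtain ⟨T, hT⟩ := h
  obtain ⟨S, hS⟩ := h'
  exact ⟨T.trans S, fun v => by rw [hT, hS]; rfl⟩

lemma PolyFormEquiv.cons {n : ℕ} {A B : Fin n → ℝ[X]} (c : ℝ[X]) (h : PolyFormEquiv A B) :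
    PolyFormEquiv (Matrix.vecCons c A) (Matrix.vecCons c B) := by
  obtain ⟨T, hT⟩ := h
  let L := Fin.consLinearEquiv (RatFunc ℝ) (fun _ : Fin (n + 1) => RatFunc ℝ)
  refine ⟨L.symm ≪≫ₗ (LinearEquiv.refl _ _).prodCongr T ≪≫ₗ L, fun v => ?_⟩
  have := hT (fun i => v i.succ)
  simp only [Fin.sum_univ_succ, Matrix.cons_val_zero, Matrix.cons_val_succ]
  rw [this]
  rfl

/-- A change of variables in the first two coordinates. -/
lemma PolyFormEquiv.binary {n : ℕ} (W : Fin n → ℝ[X]) {a b a' b' : ℝ[X]} (p q r s : RatFunc ℝ)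
    (h1 : toRF a = toRF a' * p ^ 2 + toRF b' * r ^ 2)
    (h2 : toRF b = toRF a' * q ^ 2 + toRF b' * s ^ 2)
    (h3 : toRF a' * p * q + toRF b' * r * s = 0) (hdet : p * s - q * r ≠ 0) :
    PolyFormEquiv (Matrix.vecCons a (Matrix.vecCons b W))
      (Matrix.vecCons a' (Matrix.vecCons b' W)) := by
  let T : (Fin (n + 2) → RatFunc ℝ) ≃ₗ[RatFunc ℝ] (Fin (n + 2) → RatFunc ℝ) :=
    { toFun := fun v => Matrix.vecCons (p * v 0 + q * v 1) (Matrix.vecCons (r * v 0 + s * v 1)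
        fun i => v i.succ.succ)
      invFun := fun v => Matrix.vecCons ((s * v 0 - q * v 1) / (p * s - q * r))
        (Matrix.vecCons ((p * v 1 - r * v 0) / (p * s - q * r)) fun i => v i.succ.succ)
      map_add' := by
        intro v w
        funext i
        refine Fin.cases ?_ (fun i => Fin.cases ?_ (fun i => ?_) i) i
        · simp; ring
        · simp; ring
        · simp
      map_smul' := by
        intro k v
        funext i
        refine Fin.cases ?_ (fun i => Fin.cases ?_ (fun i => ?_) i) i
        · simp; ring
        · simp; ring
        · simp
      left_inv := by
        intro v
        funext i
        refine Fin.cases ?_ (fun i => Fin.cases ?_ (fun i => ?_) i) i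
        · change (s * (p * v 0 + q * v 1) - q * (r * v 0 + s * v 1)) / (p * s - q * r) = v 0
          rw [div_eq_iff hdet]; ring
        · change (p * (r * v 0 + s * v 1) - r * (p * v 0 + q * v 1)) / (p * s - q * r) = v 1
          rw [div_eq_iff hdet]; ring
        · simp
      right_inv := by
        intro v
        funext i
        refine Fin.cases ?_ (fun i => Fin.cases ?_ (fun i => ?_) i) i
        · change p * ((s * v 0 - q * v 1) / (p * s - q * r))
            + q * ((p * v 1 - r * v 0) / (p * s - q * r)) = v 0
          rw [mul_div_assoc', mul_div_assoc', ← add_div, div_eq_iff hdet]; ring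
        · change r * ((s * v 0 - q * v 1) / (p * s - q * r))
            + s * ((p * v 1 - r * v 0) / (p * s - q * r)) = v 1
          rw [mul_div_assoc', mul_div_assoc', ← add_div, div_eq_iff hdet]; ring
        · simp }
  refine ⟨T, fun v => ?_⟩
  have hT0 : T v 0 = p * v 0 + q * v 1 := rfl
  have hT1 : T v (Fin.succ 0) = r * v 0 + s * v 1 := rfl
  have hT2 : ∀ i : Fin n, T v i.succ.succ = v i.succ.succ := fun _ => rfl
  simp only [Fin.sum_univ_succ, Matrix.cons_val_zero, Matrix.cons_val_succ, hT0, hT1, hT2]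
  have : (Fin.succ 0 : Fin (n + 2)) = 1 := rfl
  rw [this]
  linear_combination v 0 ^ 2 * h1 + v 1 ^ 2 * h2 - 2 * v 0 * v 1 * h3

lemma PolyFormEquiv.swap {n : ℕ} (W : Fin n → ℝ[X]) (a b : ℝ[X]) :
    PolyFormEquiv (Matrix.vecCons a (Matrix.vecCons b W))
      (Matrix.vecCons b (Matrix.vecCons a W)) :=
  .binary W 0 1 1 0 (by ring) (by ring) (by ring) (by norm_num)

/-- If `a`, `b` never both have the sign opposite to `c`, then `⟨a, b⟩` represents `c`, and splitting
off `c` leaves `⟨abc⟩`. This is the local-global principle for the conic `x² + ab y² = ac`. -/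
lemma PolyFormEquiv.binary_represents {n : ℕ} (W : Fin n → ℝ[X]) {a b c : ℝ[X]} (ha : a ≠ 0)
    (hb : b ≠ 0) (hc : c ≠ 0)
    (h : ∀ᶠ t in cofinite, 0 < a.eval t * c.eval t ∨ 0 < b.eval t * c.eval t) :
    PolyFormEquiv (Matrix.vecCons a (Matrix.vecCons b W))
      (Matrix.vecCons c (Matrix.vecCons (a * b * c) W)) := by
  have hu : -(a * b) ≠ 0 := neg_ne_zero.2 (mul_ne_zero ha hb)
  have hloc : ∀ᶠ t in cofinite, 0 < (-(a * b)).eval t ∨ 0 < (a * c).eval t := by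
    filter_upwards [h, eventually_eval_ne ha, eventually_eval_ne hb] with t ht hat hbt
    simp only [eval_neg, eval_mul]
    rcases ht with ht | ht
    · exact Or.inr ht
    by_cases hab : 0 < -(a.eval t * b.eval t)
    · exact Or.inl hab
    right
    have hab' : 0 < a.eval t * b.eval t :=
      lt_of_le_of_ne (by linarith) (mul_ne_zero hat hbt).symm
    have : 0 < (a.eval t * c.eval t) * (b.eval t) ^ 2 := by nlinarith
    exact pos_of_mul_pos_left this (sq_nonneg _)
  obtain ⟨x, y, hxy⟩ := (conicIsotropic_of_local _ _ _ hu (mul_ne_zero ha hc) rfl hloc).norm hu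
  have ha' := toRF_ne ha
  have hb' := toRF_ne hb
  have hc' := toRF_ne hc
  rw [toRF_neg, toRF_mul, toRF_mul] at hxy
  have e1 : toRF (a * b * c) = toRF a * toRF b * toRF c := by rw [toRF_mul, toRF_mul]
  -- `c = a (x / a)² + b y²`, and the second basis vector is the orthogonal `(-b y, x)`
  refine .binary W (x / toRF c) (toRF b * y / toRF c) (-y / toRF c) (x / (toRF a * toRF c))
    ?_ ?_ ?_ ?_
  · rw [e1]; field_simp; linear_combination hxy
  · rw [e1]; field_simp; linear_combination hxy
  · rw [e1]; field_simp; ring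
  · have : x / toRF c * (x / (toRF a * toRF c)) - toRF b * y / toRF c * (-y / toRF c)
        = 1 / toRF c := by
      field_simp; linear_combination -hxy
    rw [this]
    exact one_div_ne_zero (toRF_ne hc)

/-- Local-global principle for representing `c` by a form of rank at least two. The first two entries
are replaced by `e` and `abe`, where `e` takes the common sign of `a` and `b`, or the sign of `c`
where those differ, so that `c` is still locally represented without `abe`. -/
lemma represents_of_local {n : ℕ} : ∀ (A : Fin (n + 2) → ℝ[X]) (c : ℝ[X]), (∀ i, A i ≠ 0) → c ≠ 0 →
    (∀ᶠ t in cofinite, ∃ i, 0 < (A i).eval t * c.eval t) →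
    ∃ A' : Fin (n + 1) → ℝ[X], (∀ i, A' i ≠ 0) ∧ PolyFormEquiv A (Matrix.vecCons c A') := by
  induction n with
  | zero =>
    intro A c hA hc h
    obtain ⟨a, A, rfl⟩ : ∃ a A₁, A = Matrix.vecCons a A₁ := ⟨_, _, (Matrix.cons_head_tail A).symm⟩
    obtain ⟨b, W, rfl⟩ : ∃ b W, A = Matrix.vecCons b W := ⟨_, _, (Matrix.cons_head_tail A).symm⟩
    have ha : a ≠ 0 := hA 0
    have hb : b ≠ 0 := hA 1
    refine ⟨_, ?_, .binary_represents W ha hb hc ?_⟩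
    · intro i
      fin_cases i
      simp [ha, hb, hc]
    · filter_upwards [h] with t ⟨i, hi⟩
      fin_cases i
      · exact Or.inl hi
      · exact Or.inr hi
  | succ n ih =>
    intro A c hA hc h
    obtain ⟨a, A, rfl⟩ : ∃ a A₁, A = Matrix.vecCons a A₁ := ⟨_, _, (Matrix.cons_head_tail A).symm⟩
    obtain ⟨b, W, rfl⟩ : ∃ b W, A = Matrix.vecCons b W := ⟨_, _, (Matrix.cons_head_tail A).symm⟩
    have ha : a ≠ 0 := hA 0
    have hb : b ≠ 0 := hA 1
    have hW : ∀ i, W i ≠ 0 := fun i => hA i.succ.succ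
    obtain ⟨e, he, hmaj⟩ := exists_majority a b c ha hb hc
    have step1 := PolyFormEquiv.binary_represents W ha hb he (by
      filter_upwards [hmaj, eventually_eval_ne ha, eventually_eval_ne hb,
        eventually_eval_ne he] with t h1 h2 h3 h4
      rcases lt_or_gt_of_ne h2 with h2 | h2 <;> rcases lt_or_gt_of_ne h3 with h3 | h3 <;>
        rcases lt_or_gt_of_ne h4 with h4 | h4 <;>
        simp [mul_pos_iff, h2, h3, h4, h2.le, h3.le, h4.le, not_lt.2] at h1 ⊢)
    obtain ⟨A', hA', hE⟩ := ih (Matrix.vecCons e W) c (Fin.cases he hW) hc (by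
      filter_upwards [h, hmaj, eventually_eval_ne ha, eventually_eval_ne hb,
        eventually_eval_ne he, eventually_eval_ne hc] with t ⟨i, hi⟩ h1 h2 h3 h4 h5
      have head : 0 < e.eval t * c.eval t → ∃ i, 0 < (Matrix.vecCons e W i).eval t * c.eval t :=
        fun h => ⟨0, h⟩
      revert hi
      refine Fin.cases (fun hi => head ?_) (fun i => Fin.cases (fun hi => head ?_)
        (fun i hi => ⟨i.succ, hi⟩) i) i
      · simp only [Matrix.cons_val_zero] at hi
        rcases lt_or_gt_of_ne h2 with h2 | h2 <;> rcases lt_or_gt_of_ne h5 with h5 | h5 <;>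
          rcases lt_or_gt_of_ne h4 with h4 | h4 <;>
          simp [mul_pos_iff, h2, h4, h5, h2.le, h5.le, h4.le, not_lt.2] at h1 hi ⊢
      · simp only [Matrix.cons_val_succ, Matrix.cons_val_zero] at hi
        rcases lt_or_gt_of_ne h3 with h3 | h3 <;> rcases lt_or_gt_of_ne h5 with h5 | h5 <;>
          rcases lt_or_gt_of_ne h4 with h4 | h4 <;>
          simp [mul_pos_iff, h3, h4, h5, h3.le, h5.le, h4.le, not_lt.2] at h1 hi ⊢)
    exact ⟨Matrix.vecCons (a * b * e) A',
      Fin.cases (mul_ne_zero (mul_ne_zero ha hb) he) hA',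
      (step1.trans (.swap W _ _)).trans ((hE.cons (a * b * e)).trans (.swap _ _ _))⟩

/-! ### Necessity of the invariants -/

open Matrix in
/-- The Gram matrix form of an equivalence. -/
lemma DiagFormEquiv.exists_matrix {n : ℕ} {a b : Fin n → RatFunc ℝ} (h : DiagFormEquiv a b) :
    ∃ M : Matrix (Fin n) (Fin n) (RatFunc ℝ), Mᵀ * diagonal b * M = diagonal a := by
  obtain ⟨T, hT⟩ := h
  have polar : ∀ v w : Fin n → RatFunc ℝ,
      ∑ i, b i * (T v i * T w i) = ∑ i, a i * (v i * w i) := by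
    intro v w
    have h1 := hT (v + w)
    have h2 := hT v
    have h3 := hT w
    simp only [map_add, Pi.add_apply, add_sq, mul_add, Finset.sum_add_distrib] at h1
    have e1 : ∑ i, a i * (2 * v i * w i) = 2 * ∑ i, a i * (v i * w i) := by
      rw [Finset.mul_sum]; exact Finset.sum_congr rfl fun i _ => by ring
    have e2 : ∑ i, b i * (2 * T v i * T w i) = 2 * ∑ i, b i * (T v i * T w i) := by
      rw [Finset.mul_sum]; exact Finset.sum_congr rfl fun i _ => by ring
    rw [e1, e2, h2, h3] at h1
    have h4 : (2 : RatFunc ℝ) ≠ 0 := two_ne_zero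
    refine mul_left_cancel₀ h4 ?_
    linear_combination -h1
  refine ⟨LinearMap.toMatrix' T.toLinearMap, ?_⟩
  ext i j
  have := polar (Pi.single i 1) (Pi.single j 1)
  rw [mul_apply]
  simp only [mul_diagonal, transpose_apply, LinearMap.toMatrix'_apply]
  calc _ = ∑ k, b k * (T (Pi.single i 1) k * T (Pi.single j 1) k) := by
        refine Finset.sum_congr rfl fun k _ => ?_
        simp only [LinearEquiv.coe_coe]
        ring
    _ = _ := by
        rw [this]
        rcases eq_or_ne i j with rfl | hij
        · simp [Pi.single_apply]
        · simp [Pi.single_apply, hij.symm, diagonal_apply_ne _ hij]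

lemma PolyFormEquiv.isSquare {n : ℕ} {A B : Fin n → ℝ[X]} (h : PolyFormEquiv A B) :
    IsSquare (toRF ((∏ i, A i) * ∏ i, B i)) := by
  obtain ⟨M, hM⟩ := h.exists_matrix
  have := congrArg Matrix.det hM
  simp only [Matrix.det_mul, Matrix.det_transpose, Matrix.det_diagonal] at this
  have hp : ∀ D : Fin n → ℝ[X], toRF (∏ i, D i) = ∏ i, toRF (D i) := fun D => map_prod _ _ _
  refine ⟨M.det * ∏ i, toRF (B i), ?_⟩
  rw [toRF_mul, hp, hp, ← this]
  ring

open Matrix in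
/-- One half of Sylvester's law of inertia: a linear map pulling `⟨b⟩` back to a positive multiple of
`⟨a⟩` restricts to an injection of the positive coordinate subspace of `⟨a⟩`, even after
projection to that of `⟨b⟩`. Invertibility of the map is not needed. -/
lemma card_pos_le {n : ℕ} {a b : Fin n → ℝ} {d : ℝ} (hd : d ≠ 0) (M : Matrix (Fin n) (Fin n) ℝ)
    (hM : Mᵀ * diagonal b * M = d ^ 2 • diagonal a) :
    (Finset.univ.filter fun i => 0 < a i).card ≤ (Finset.univ.filter fun i => 0 < b i).card := by
  classical
  by_contra! hlt
  have hq : ∀ v : Fin n → ℝ, ∑ i, b i * (M *ᵥ v) i ^ 2 = d ^ 2 * ∑ i, a i * v i ^ 2 := by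
    intro v
    have h1 : v ⬝ᵥ (Mᵀ * diagonal b * M) *ᵥ v = ∑ i, b i * (M *ᵥ v) i ^ 2 := by
      rw [← mulVec_mulVec, ← mulVec_mulVec, dotProduct_mulVec, vecMul_transpose]
      simp only [dotProduct, mulVec_diagonal]
      exact Finset.sum_congr rfl fun i _ => by ring
    rw [← h1, hM, smul_mulVec, dotProduct_smul, smul_eq_mul]
    congr 1
    simp only [dotProduct, mulVec_diagonal]
    exact Finset.sum_congr rfl fun i _ => by ring
  let E : ({i // 0 < a i} → ℝ) →ₗ[ℝ] (Fin n → ℝ) :=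
    { toFun := fun v i => if h : 0 < a i then v ⟨i, h⟩ else 0
      map_add' := by intro v w; ext i; by_cases h : 0 < a i <;> simp [h]
      map_smul' := by intro k v; ext i; by_cases h : 0 < a i <;> simp [h] }
  let P : (Fin n → ℝ) →ₗ[ℝ] ({i // 0 < b i} → ℝ) := LinearMap.funLeft ℝ ℝ Subtype.val
  let L := P ∘ₗ M.mulVecLin ∘ₗ E
  have hker : L.ker ≠ ⊥ := by
    apply LinearMap.ker_ne_bot_of_finrank_lt
    simpa [Fintype.card_subtype] using hlt
  obtain ⟨v, hv, hv0⟩ := (Submodule.ne_bot_iff _).1 hker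
  have hz : ∀ i, 0 < b i → (M *ᵥ (E v)) i = 0 := by
    intro i hi
    have := congrFun (LinearMap.mem_ker.1 hv) ⟨i, hi⟩
    exact this
  have hle : ∑ i, b i * (M *ᵥ (E v)) i ^ 2 ≤ 0 := by
    refine Finset.sum_nonpos fun i _ => ?_
    by_cases hi : 0 < b i
    · simp [hz i hi]
    · exact mul_nonpos_of_nonpos_of_nonneg (not_lt.1 hi) (sq_nonneg _)
  obtain ⟨⟨j, hj⟩, hvj⟩ := Function.ne_iff.1 hv0
  have hgt : 0 < ∑ i, a i * (E v) i ^ 2 := by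
    refine Finset.sum_pos' (fun i _ => ?_) ⟨j, Finset.mem_univ _, ?_⟩
    · by_cases hi : 0 < a i
      · exact mul_nonneg hi.le (sq_nonneg _)
      · simp [E, hi]
    · have : E v j = v ⟨j, hj⟩ := by simp [E, hj]
      rw [this]
      have hvj' : v ⟨j, hj⟩ ≠ 0 := hvj
      positivity
  rw [hq] at hle
  have : 0 < d ^ 2 := by positivity
  nlinarith

open Matrix in
/-- After clearing denominators, an equivalence can be evaluated at almost every real point. -/
lemma PolyFormEquiv.card_le {n : ℕ} {A B : Fin n → ℝ[X]} (h : PolyFormEquiv A B) :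
    ∀ᶠ t in cofinite, (Finset.univ.filter fun i => 0 < (A i).eval t).card ≤
      (Finset.univ.filter fun i => 0 < (B i).eval t).card := by
  obtain ⟨M, hM⟩ := h.exists_matrix
  obtain ⟨⟨d, hd⟩, hint⟩ := IsLocalization.exist_integer_multiples_of_finite (nonZeroDivisors ℝ[X])
    (fun ij : Fin n × Fin n => M ij.1 ij.2)
  choose P hP using hint
  have hd0 : d ≠ 0 := nonZeroDivisors.ne_zero hd
  let Q : Matrix (Fin n) (Fin n) ℝ[X] := Matrix.of fun i j => P (i, j)
  let φ : ℝ[X] →+* RatFunc ℝ := algebraMap ℝ[X] (RatFunc ℝ)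
  have hQ : Q.map φ = toRF d • M := by
    ext i j
    have := hP (i, j)
    simp only [Algebra.smul_def] at this
    exact this
  have hQP : Qᵀ * diagonal B * Q = d ^ 2 • diagonal A := by
    apply Matrix.map_injective (RatFunc.algebraMap_injective ℝ)
    change (Qᵀ * diagonal B * Q).map φ = (d ^ 2 • diagonal A).map φ
    rw [Matrix.map_mul, Matrix.map_mul, transpose_map, hQ, diagonal_map (map_zero φ)]
    have e2 : (d ^ 2 • diagonal A).map φ = toRF d ^ 2 • diagonal (fun i => toRF (A i)) := by
      ext i j
      by_cases hij : i = j
      · subst hij; simp [φ, toRF]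
      · simp [hij]
    rw [e2, ← hM, transpose_smul, smul_mul, smul_mul, Matrix.mul_smul, smul_smul, sq]
    rfl
  filter_upwards [eventually_eval_ne hd0] with t ht
  refine card_pos_le ht (Q.map (evalRingHom t)) ?_
  have := congrArg (fun N => N.map (evalRingHom t)) hQP
  simp only [Matrix.map_mul] at this
  rw [transpose_map, diagonal_map (map_zero _)] at this
  refine Eq.trans this ?_
  ext i j
  by_cases hij : i = j
  · subst hij; simp
  · simp [hij]

lemma PolyFormEquiv.card_eq {n : ℕ} {A B : Fin n → ℝ[X]} (h : PolyFormEquiv A B) :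
    ∀ᶠ t in cofinite, (Finset.univ.filter fun i => 0 < (A i).eval t).card =
      (Finset.univ.filter fun i => 0 < (B i).eval t).card := by
  filter_upwards [h.card_le, h.symm.card_le] with t h1 h2
  exact le_antisymm h1 h2

/-! ### Classification -/

/-- Sufficiency, by induction on the rank: the first entry of `B` is represented by `A`, and splitting
it off from both sides preserves the hypotheses. -/
lemma polyFormEquiv_of_invariants {n : ℕ} : ∀ A B : Fin n → ℝ[X], (∀ i, A i ≠ 0) → (∀ i, B i ≠ 0) →
    IsSquare (toRF ((∏ i, A i) * ∏ i, B i)) →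
    (∀ᶠ t in cofinite, (Finset.univ.filter fun i => 0 < (A i).eval t).card =
      (Finset.univ.filter fun i => 0 < (B i).eval t).card) → PolyFormEquiv A B := by
  induction n with
  | zero =>
    intro A B _ _ _ _
    rw [Subsingleton.elim A B]
    exact .refl B
  | succ n ih =>
    intro A B hA hB hsq hcard
    rcases n with _ | n
    · obtain ⟨s, hs⟩ := hsq
      rw [Fin.prod_univ_one, Fin.prod_univ_one, toRF_mul] at hs
      have ha := toRF_ne (hA 0)
      have hb := toRF_ne (hB 0)
      have hs0 : s ≠ 0 := by
        rintro rfl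
        simp [ha, hb] at hs
      refine ⟨LinearEquiv.smulOfNeZero _ _ (s / toRF (B 0)) (div_ne_zero hs0 hb), fun v => ?_⟩
      rw [Fin.sum_univ_one, Fin.sum_univ_one]
      simp only [LinearEquiv.smulOfNeZero_apply, Pi.smul_apply, smul_eq_mul]
      field_simp
      linear_combination v 0 ^ 2 * hs
    · obtain ⟨A', hA', hE⟩ := represents_of_local A (B 0) hA (hB 0) (by
        filter_upwards [hcard, eventually_all.2 fun i => eventually_eval_ne (hA i),
          eventually_eval_ne (hB 0)] with t ht hAt hBt
        by_contra! hno
        rcases lt_or_gt_of_ne hBt with hneg | hpos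
        · have h1 : ∀ i, 0 < (A i).eval t := by
            intro i
            refine lt_of_le_of_ne ?_ (hAt i).symm
            by_contra! h
            nlinarith [hno i, mul_pos_of_neg_of_neg h hneg]
          have h2 : (Finset.univ.filter fun i => 0 < (B i).eval t) = Finset.univ := by
            rw [← Finset.card_eq_iff_eq_univ, ← ht]
            simp [h1]
          have h3 := Finset.mem_univ (0 : Fin (n + 2))
          rw [← h2] at h3
          exact absurd (Finset.mem_filter.1 h3).2 (not_lt.2 hneg.le)
        · have h1 : (Finset.univ.filter fun i => 0 < (A i).eval t) = ∅ := by
            refine Finset.filter_eq_empty_iff.2 fun i _ hi => ?_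
            nlinarith [hno i, mul_pos hi hpos]
          rw [h1, Finset.card_empty] at ht
          have h2 := Finset.card_eq_zero.1 ht.symm
          exact Finset.filter_eq_empty_iff.1 h2 (Finset.mem_univ 0) hpos)
      have hBcons : B = Matrix.vecCons (B 0) (fun i => B i.succ) := by
        funext i
        refine Fin.cases rfl (fun i => rfl) i
      have htail : PolyFormEquiv A' (fun i => B i.succ) := by
        refine ih _ _ hA' (fun i => hB _) ?_ ?_
        · obtain ⟨s, hs⟩ := hsq
          obtain ⟨r, hr⟩ := hE.isSquare
          rw [Fin.prod_univ_succ B] at hs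
          rw [Fin.prod_univ_succ (Matrix.vecCons (B 0) A')] at hr
          simp only [Matrix.cons_val_zero, Matrix.cons_val_succ, toRF_mul] at hs hr
          have h1 := toRF_ne (Finset.prod_ne_zero_iff.2 fun i (_ : i ∈ Finset.univ) => hA i)
          have h2 := toRF_ne (hB 0)
          refine ⟨s * r / (toRF (∏ i, A i) * toRF (B 0)), ?_⟩
          rw [toRF_mul]
          field_simp
          linear_combination r ^ 2 * hs +
            toRF (∏ i, A i) * (toRF (B 0) * toRF (∏ i : Fin (n + 1), B i.succ)) * hr
        · filter_upwards [hcard, hE.card_eq] with t h1 h2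
          have e1 := Fin.card_filter_univ_succ fun i => 0 < (B i).eval t
          have e2 := Fin.card_filter_univ_succ fun i =>
            0 < (Matrix.vecCons (B 0) A' i).eval t
          have e3 := e1.symm.trans (h1.symm.trans (h2.trans e2))
          simp only [Matrix.cons_val_zero, Matrix.cons_val_succ] at e3
          split_ifs at e3 <;> omega
      rw [hBcons]
      exact hE.trans (htail.cons _)

theorem stmt_4 (n : ℕ) (hn : 1 ≤ n) (A B : Fin n → Polynomial ℝ)
    (hA : ∀ i, A i ≠ 0) (hB : ∀ i, B i ≠ 0) :
    DiagFormEquiv (fun i => toRF (A i)) (fun i => toRF (B i)) ↔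
      (IsSquare (toRF ((∏ i, A i) * ∏ i, B i)) ∧
        {t₀ : ℝ |
          (Finset.univ.filter fun i => 0 < (A i).eval t₀).card ≠
            (Finset.univ.filter fun i => 0 < (B i).eval t₀).card}.Finite) := by
  constructor
  · intro h
    exact ⟨PolyFormEquiv.isSquare h, eventually_cofinite.1 (PolyFormEquiv.card_eq h)⟩
  · rintro ⟨hsq, hfin⟩
    exact polyFormEquiv_of_invariants A B hA hB hsq (eventually_cofinite.2 hfin)
end

section
/- Let r ≥ 1 and let ε₁ < ε₂ < ⋯ < ε_{2r} and λ₁ < λ₂ be real numbers with ε₁ < λ₁ and λ₂ < ε₂. Then the set M = {(x,y,w,t) ∈ ℝ⁴ : x² + y² + (t−ε₁)(t−ε₂)⋯(t−ε_{2r}) = 0 and w² + (t−λ₁)(t−λ₂) = 0}, equipped with the subspace topology of ℝ⁴, is homeomorphic to the two-dimensional torus S¹ × S¹ (the product of two circles). -/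
/-!
On `M` the equation `w² = -(t - l₁)(t - l₂)` is that of a circle in the `(t, w)`-plane with centre
`c = (l₁ + l₂) / 2` and radius `h = (l₂ - l₁) / 2`; in particular `l₁ ≤ t ≤ l₂`. There
`t - ε₁ > 0` while the other `2r - 1` factors `t - εᵢ` are negative, so `P(t) = ∏ (t - εᵢ) < 0`
(`prod_sub_neg`), and the fibre over `(t, w)` is a circle `x² + y² = -P(t)` of positive radius.
Rescaling each fibre by `√(-P(t))` trivialises this circle bundle over a circle.
-/

/-- The unit circle in `ℝ²`. -/
def unitCircle : Set (ℝ × ℝ) := {u : ℝ × ℝ | u.1 ^ 2 + u.2 ^ 2 = 1}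

/-- For `t` between the two smallest roots exactly one factor is positive and an odd number are negative. -/
lemma prod_sub_neg (r : ℕ) (ε : Fin (2 * r) → ℝ) (hε : StrictMono ε) (t : ℝ)
    (h0 : 0 < 2 * r) (h1 : 1 < 2 * r) (h₁ : ε ⟨0, h0⟩ < t) (h₂ : t < ε ⟨1, h1⟩) :
    ∏ i, (t - ε i) < 0 := by
  obtain ⟨k, rfl⟩ : ∃ k, r = k + 1 := ⟨r - 1, by omega⟩
  change ∏ i : Fin (2 * k + 1 + 1), (t - ε i) < 0
  rw [Fin.prod_univ_succ]
  refine mul_neg_of_pos_of_neg (sub_pos.2 h₁) ?_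
  have hpos : 0 < ∏ i : Fin (2 * k + 1), (ε i.succ - t) := by
    refine Finset.prod_pos fun i _ => sub_pos.2 (h₂.trans_le (hε.monotone ?_))
    rw [Fin.le_def]
    simp
  have hneg : ∏ i : Fin (2 * k + 1), (t - ε i.succ) = -∏ i : Fin (2 * k + 1), (ε i.succ - t) := by
    rw [Finset.prod_congr rfl fun i _ => (neg_sub (ε i.succ) t).symm, Finset.prod_neg,
      Finset.card_univ, Fintype.card_fin, Odd.neg_one_pow ⟨k, rfl⟩, neg_one_mul]
  rw [hneg]
  exact neg_neg_of_pos hpos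

/-- A circle bundle of positive radius `√(-P t)` over a circle in the `(t, w)`-plane is a torus. -/
lemma circleBundle_homeo (P : ℝ → ℝ) (hP : Continuous P) (l₁ l₂ : ℝ) (hl : l₁ < l₂)
    (hneg : ∀ t, l₁ ≤ t → t ≤ l₂ → P t < 0) :
    Nonempty (({p : ℝ × ℝ × ℝ × ℝ |
        p.1 ^ 2 + p.2.1 ^ 2 + P p.2.2.2 = 0 ∧
        p.2.2.1 ^ 2 + (p.2.2.2 - l₁) * (p.2.2.2 - l₂) = 0} : Set (ℝ × ℝ × ℝ × ℝ)) ≃ₜ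
      (unitCircle × unitCircle)) := by
  obtain ⟨c, h, hh, rfl, rfl⟩ : ∃ c h : ℝ, 0 < h ∧ l₁ = c - h ∧ l₂ = c + h :=
    ⟨(l₁ + l₂) / 2, (l₂ - l₁) / 2, by linarith, by ring, by ring⟩
  have hh0 : h ≠ 0 := hh.ne'
  have key : ∀ w t : ℝ, w ^ 2 + (t - (c - h)) * (t - (c + h)) = 0 → 0 < -P t := by
    intro w t hw
    have habs : |t - c| ≤ h := abs_le_of_sq_le_sq (by nlinarith [sq_nonneg w]) hh.le
    obtain ⟨ha, hb⟩ := abs_le.1 habs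
    exact neg_pos.2 (hneg t (by linarith) (by linarith))
  have key' : ∀ v : ℝ × ℝ, v ∈ unitCircle → 0 < -P (c + h * v.1) := by
    intro v hv
    refine key (h * v.2) _ ?_
    have hv' : v.1 ^ 2 + v.2 ^ 2 = 1 := hv
    linear_combination h ^ 2 * hv'
  refine ⟨{
    toFun := fun p =>
      (⟨(p.1.1 / √(-P p.1.2.2.2), p.1.2.1 / √(-P p.1.2.2.2)), ?_⟩,
        ⟨((p.1.2.2.2 - c) / h, p.1.2.2.1 / h), ?_⟩)
    invFun := fun q =>
      ⟨(√(-P (c + h * q.2.1.1)) * q.1.1.1, √(-P (c + h * q.2.1.1)) * q.1.1.2,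
        h * q.2.1.2, c + h * q.2.1.1), ?_, ?_⟩
    left_inv := ?_
    right_inv := ?_
    continuous_toFun := ?_
    continuous_invFun := ?_ }⟩
  · obtain ⟨⟨x, y, w, t⟩, hx, hw⟩ := p
    dsimp only at hx hw
    have hpos := key w t hw
    change (x / √(-P t)) ^ 2 + (y / √(-P t)) ^ 2 = 1
    rw [div_pow, div_pow, Real.sq_sqrt hpos.le, ← add_div, div_eq_one_iff_eq hpos.ne']
    linarith
  · obtain ⟨⟨x, y, w, t⟩, hx, hw⟩ := p
    dsimp only at hx hw
    change ((t - c) / h) ^ 2 + (w / h) ^ 2 = 1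
    field_simp
    linear_combination hw
  · obtain ⟨⟨u, hu⟩, ⟨v, hv⟩⟩ := q
    have hu' : u.1 ^ 2 + u.2 ^ 2 = 1 := hu
    dsimp only
    rw [mul_pow, mul_pow, Real.sq_sqrt (key' v hv).le]
    linear_combination (-P (c + h * v.1)) * hu'
  · obtain ⟨⟨u, hu⟩, ⟨v, hv⟩⟩ := q
    have hv' : v.1 ^ 2 + v.2 ^ 2 = 1 := hv
    dsimp only
    linear_combination h ^ 2 * hv'
  · rintro ⟨⟨x, y, w, t⟩, hx, hw⟩
    dsimp only at hx hw
    have hs := (Real.sqrt_pos.2 (key w t hw)).ne'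
    have ht : c + h * ((t - c) / h) = t := by field_simp; ring
    simp only [Subtype.mk.injEq, Prod.mk.injEq, ht]
    exact ⟨mul_div_cancel₀ _ hs, mul_div_cancel₀ _ hs, mul_div_cancel₀ _ hh0, trivial⟩
  · rintro ⟨⟨⟨a, b⟩, hu⟩, ⟨⟨d, e⟩, hv⟩⟩
    have hs := (Real.sqrt_pos.2 (key' _ hv)).ne'
    dsimp only at hs
    simp [hs, hh0]
  · have hs : ∀ p : ({p : ℝ × ℝ × ℝ × ℝ | p.1 ^ 2 + p.2.1 ^ 2 + P p.2.2.2 = 0 ∧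
        p.2.2.1 ^ 2 + (p.2.2.2 - (c - h)) * (p.2.2.2 - (c + h)) = 0} : Set (ℝ × ℝ × ℝ × ℝ)),
        √(-P p.1.2.2.2) ≠ 0 := fun p => (Real.sqrt_pos.2 (key _ _ p.2.2)).ne'
    fun_prop (disch := assumption)
  · fun_prop

/-- For `ε₁ < λ₁ < λ₂ < ε₂ < ⋯`, the real affine surface
`x² + y² + (t−ε₁)⋯(t−ε_{2r}) = 0, w² + (t−λ₁)(t−λ₂) = 0` is homeomorphic to the torus. -/
theorem stmt_5 (r : ℕ) (hr : 1 ≤ r) (ε : Fin (2 * r) → ℝ) (hε : StrictMono ε)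
    (l₁ l₂ : ℝ) (hl : l₁ < l₂)
    (h₁ : ε ⟨0, by omega⟩ < l₁) (h₂ : l₂ < ε ⟨1, by omega⟩) :
    Nonempty (({p : ℝ × ℝ × ℝ × ℝ |
        p.1 ^ 2 + p.2.1 ^ 2 + ∏ i, (p.2.2.2 - ε i) = 0 ∧
        p.2.2.1 ^ 2 + (p.2.2.2 - l₁) * (p.2.2.2 - l₂) = 0} : Set (ℝ × ℝ × ℝ × ℝ)) ≃ₜ
      (unitCircle × unitCircle)) := by
  refine circleBundle_homeo (fun t => ∏ i, (t - ε i)) (by fun_prop) l₁ l₂ hl fun t ht₁ ht₂ => ?_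
  exact prod_sub_neg r ε hε t _ _ (h₁.trans_le ht₁) (ht₂.trans_lt h₂)
end

section
/- Let r ≥ 1 and let ε₁ < ε₂ < ⋯ < ε_{2r} and λ₁ < λ₂ be real numbers with λ₁ < ε₁ and ε₁ < λ₂ < ε₂. Then the set M = {(x,y,w,t) ∈ ℝ⁴ : x² + y² + (t−ε₁)(t−ε₂)⋯(t−ε_{2r}) = 0 and w² + (t−λ₁)(t−λ₂) = 0}, equipped with the subspace topology of ℝ⁴, is homeomorphic to the two-dimensional sphere S². -/
/-!
Write `e = ε₁` and `G t = ∏_{i ≠ 1} (εᵢ - t)`. The number of factors being even,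
`∏ (t - εᵢ) = (e - t) * G t`, so the surface is given by `x² + y² = (t - e) * G t` and
`w² = (t - l₁) * (l₂ - t)`. The second equation forces `l₁ ≤ t ≤ l₂`, where `G t > 0` because
`l₂ < ε₂`; then the first one forces `e ≤ t`, and so also `t - l₁ > 0`.

Dividing `(x, y)` by `√(G t)` and `w` by `√(t - l₁)` turns the equations into
`X² + Y² = t - e` and `W² = l₂ - t`, that is, into the sphere `X² + Y² + W² = l₂ - e` together with
the graph `t = e + X² + Y²` over it. Both this change of variables and its inverse are continuous;
a final scaling by `√(l₂ - e)` gives the unit sphere.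
-/

/-- The unit sphere in `ℝ³`. -/
def unitSphere2 : Set (ℝ × ℝ × ℝ) := {u : ℝ × ℝ × ℝ | u.1 ^ 2 + u.2.1 ^ 2 + u.2.2 ^ 2 = 1}

/-- On the surface, `t` lies in `[e, l₂]`. -/
lemma mem_range_of_eqs {G : ℝ → ℝ} {l₁ e l₂ x y w t : ℝ} (h₁ : l₁ < e) (h₂ : e < l₂)
    (hG : ∀ t ≤ l₂, 0 < G t) (hxy : x ^ 2 + y ^ 2 + (e - t) * G t = 0)
    (hw : w ^ 2 + (t - l₁) * (t - l₂) = 0) : e ≤ t ∧ t ≤ l₂ := by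
  have ht : t ≤ l₂ := by
    by_contra! h
    nlinarith [mul_pos (show 0 < t - l₁ by linarith) (show 0 < t - l₂ by linarith), sq_nonneg w]
  refine ⟨?_, ht⟩
  by_contra! h
  nlinarith [mul_pos (sub_pos.2 h) (hG t ht), sq_nonneg x, sq_nonneg y]

/-- The change of variables, for an arbitrary continuous `G` that is positive on `(-∞, l₂]`. -/
lemma nonempty_homeomorph_unitSphere2 {G : ℝ → ℝ} (hGc : Continuous G) {l₁ e l₂ : ℝ}
    (h₁ : l₁ < e) (h₂ : e < l₂) (hG : ∀ t ≤ l₂, 0 < G t) :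
    Nonempty (({p : ℝ × ℝ × ℝ × ℝ |
        p.1 ^ 2 + p.2.1 ^ 2 + (e - p.2.2.2) * G p.2.2.2 = 0 ∧
        p.2.2.1 ^ 2 + (p.2.2.2 - l₁) * (p.2.2.2 - l₂) = 0} : Set (ℝ × ℝ × ℝ × ℝ)) ≃ₜ
      unitSphere2) := by
  obtain ⟨c, hc, hc2⟩ : ∃ c : ℝ, 0 < c ∧ c ^ 2 = l₂ - e :=
    ⟨√(l₂ - e), Real.sqrt_pos.2 (by linarith), Real.sq_sqrt (by linarith)⟩
  -- On the sphere, the recovered value of `t` lies in `[e, l₂]`.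
  have hT : ∀ u ∈ unitSphere2, e ≤ e + c ^ 2 * (u.1 ^ 2 + u.2.1 ^ 2) ∧
      e + c ^ 2 * (u.1 ^ 2 + u.2.1 ^ 2) = l₂ - c ^ 2 * u.2.2 ^ 2 ∧
      e + c ^ 2 * (u.1 ^ 2 + u.2.1 ^ 2) ≤ l₂ := by
    intro u hu
    have hu' : u.1 ^ 2 + u.2.1 ^ 2 + u.2.2 ^ 2 = 1 := hu
    have hE : e + c ^ 2 * (u.1 ^ 2 + u.2.1 ^ 2) = l₂ - c ^ 2 * u.2.2 ^ 2 := by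
      linear_combination c ^ 2 * hu' + hc2
    refine ⟨le_add_of_nonneg_right (by positivity), hE, ?_⟩
    rw [hE]
    exact sub_le_self _ (by positivity)
  refine ⟨{
    toFun := fun p => ⟨(p.1.1 / (c * √(G p.1.2.2.2)), p.1.2.1 / (c * √(G p.1.2.2.2)),
      p.1.2.2.1 / (c * √(p.1.2.2.2 - l₁))), ?_⟩
    invFun := fun u => ⟨(u.1.1 * (c * √(G (e + c ^ 2 * (u.1.1 ^ 2 + u.1.2.1 ^ 2)))),
      u.1.2.1 * (c * √(G (e + c ^ 2 * (u.1.1 ^ 2 + u.1.2.1 ^ 2)))),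
      u.1.2.2 * (c * √(e + c ^ 2 * (u.1.1 ^ 2 + u.1.2.1 ^ 2) - l₁)),
      e + c ^ 2 * (u.1.1 ^ 2 + u.1.2.1 ^ 2)), ?_⟩
    left_inv := ?_
    right_inv := ?_
    continuous_toFun := ?_
    continuous_invFun := ?_ }⟩
  · obtain ⟨⟨x, y, w, t⟩, hxy, hw⟩ := p
    dsimp only at hxy hw ⊢
    obtain ⟨he, hl⟩ := mem_range_of_eqs h₁ h₂ hG hxy hw
    have hGt := hG t hl
    have hlt : 0 < t - l₁ := by linarith
    change (x / (c * √(G t))) ^ 2 + (y / (c * √(G t))) ^ 2 + (w / (c * √(t - l₁))) ^ 2 = 1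
    simp only [div_pow, mul_pow, Real.sq_sqrt hGt.le, Real.sq_sqrt hlt.le]
    field_simp
    linear_combination (t - l₁) * hxy + G t * hw - G t * (t - l₁) * hc2
  · obtain ⟨⟨a, b, d⟩, hu⟩ := u
    obtain ⟨he, hE, hl⟩ := hT _ hu
    dsimp only at he hE hl ⊢
    generalize hs : e + c ^ 2 * (a ^ 2 + b ^ 2) = t at *
    have hGt := hG t hl
    have hlt : 0 < t - l₁ := by linarith
    constructor
    · simp only [mul_pow, Real.sq_sqrt hGt.le]
      linear_combination G t * hs
    · simp only [mul_pow, Real.sq_sqrt hlt.le]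
      linear_combination (t - l₁) * hE
  · rintro ⟨⟨x, y, w, t⟩, hxy, hw⟩
    dsimp only at hxy hw ⊢
    obtain ⟨he, hl⟩ := mem_range_of_eqs h₁ h₂ hG hxy hw
    have hGt := hG t hl
    have hlt : 0 < t - l₁ := by linarith
    have hA : c * √(G t) ≠ 0 := by positivity
    have hB : c * √(t - l₁) ≠ 0 := by positivity
    have hs : e + c ^ 2 * ((x / (c * √(G t))) ^ 2 + (y / (c * √(G t))) ^ 2) = t := by
      simp only [div_pow, mul_pow, Real.sq_sqrt hGt.le]
      field_simp
      linear_combination hxy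
    simp only [hs, div_mul_cancel₀ _ hA, div_mul_cancel₀ _ hB]
  · rintro ⟨⟨a, b, d⟩, hu⟩
    obtain ⟨he, hE, hl⟩ := hT _ hu
    refine Subtype.ext ?_
    dsimp only at he hE hl ⊢
    generalize hs : e + c ^ 2 * (a ^ 2 + b ^ 2) = t at *
    have hGt := hG t hl
    have hlt : 0 < t - l₁ := by linarith
    have hA : c * √(G t) ≠ 0 := by positivity
    have hB : c * √(t - l₁) ≠ 0 := by positivity
    simp only [mul_div_cancel_right₀ _ hA, mul_div_cancel_right₀ _ hB]
  · refine Continuous.subtype_mk ?_ _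
    have hpos : ∀ p : {p : ℝ × ℝ × ℝ × ℝ |
        p.1 ^ 2 + p.2.1 ^ 2 + (e - p.2.2.2) * G p.2.2.2 = 0 ∧
        p.2.2.1 ^ 2 + (p.2.2.2 - l₁) * (p.2.2.2 - l₂) = 0},
        c * √(G p.1.2.2.2) ≠ 0 ∧ c * √(p.1.2.2.2 - l₁) ≠ 0 := by
      rintro ⟨p, hxy, hw⟩
      obtain ⟨he, hl⟩ := mem_range_of_eqs h₁ h₂ hG hxy hw
      have hGt := hG _ hl
      have hlt : 0 < p.2.2.2 - l₁ := by linarith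
      exact ⟨by positivity, by positivity⟩
    refine Continuous.prodMk ?_ (Continuous.prodMk ?_ ?_)
    · exact Continuous.div (by fun_prop) (by fun_prop) fun p => (hpos p).1
    · exact Continuous.div (by fun_prop) (by fun_prop) fun p => (hpos p).1
    · exact Continuous.div (by fun_prop) (by fun_prop) fun p => (hpos p).2
  · exact Continuous.subtype_mk (by fun_prop) _

/-- For `λ₁ < ε₁ < λ₂ < ε₂ < ⋯`, the real affine surface
`x² + y² + (t−ε₁)⋯(t−ε_{2r}) = 0, w² + (t−λ₁)(t−λ₂) = 0` is homeomorphic to the sphere. -/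
theorem stmt_6 (r : ℕ) (hr : 1 ≤ r) (ε : Fin (2 * r) → ℝ) (hε : StrictMono ε)
    (l₁ l₂ : ℝ) (hl : l₁ < l₂)
    (h₁ : l₁ < ε ⟨0, by omega⟩) (h₂ : ε ⟨0, by omega⟩ < l₂)
    (h₃ : l₂ < ε ⟨1, by omega⟩) :
    Nonempty (({p : ℝ × ℝ × ℝ × ℝ |
        p.1 ^ 2 + p.2.1 ^ 2 + ∏ i, (p.2.2.2 - ε i) = 0 ∧
        p.2.2.1 ^ 2 + (p.2.2.2 - l₁) * (p.2.2.2 - l₂) = 0} : Set (ℝ × ℝ × ℝ × ℝ)) ≃ₜ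
      unitSphere2) := by
  have hprod : ∀ t : ℝ, ∏ i, (t - ε i) = (ε ⟨0, by omega⟩ - t) *
      ∏ i ∈ Finset.univ.erase (⟨0, by omega⟩ : Fin (2 * r)), (ε i - t) := by
    intro t
    rw [Finset.mul_prod_erase Finset.univ (fun i => ε i - t) (Finset.mem_univ _)]
    -- The signs cancel because there are `2 * r` factors.
    have : ∀ i, t - ε i = -(ε i - t) := fun i => by ring
    simp only [this, Finset.prod_neg, Finset.card_univ, Fintype.card_fin, pow_mul]
    simp
  have hG : ∀ t ≤ l₂, 0 <
      ∏ i ∈ Finset.univ.erase (⟨0, by omega⟩ : Fin (2 * r)), (ε i - t) := by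
    refine fun t ht => Finset.prod_pos fun i hi => ?_
    have hi0 : i.val ≠ 0 := fun h => (Finset.mem_erase.1 hi).1 (Fin.ext h)
    have hmono : ε ⟨1, by omega⟩ ≤ ε i :=
      hε.monotone (Fin.le_def.2 (Nat.one_le_iff_ne_zero.2 hi0))
    linarith
  convert nonempty_homeomorph_unitSphere2 (by fun_prop) h₁ h₂ hG using 8 <;> rw [hprod]
end

section
/- Let r ≥ 1 and let ε₁ < ε₂ < ⋯ < ε_{2r} be real numbers. Then the set N = {(x,y,t) ∈ ℝ³ : x² + y² + (t−ε₁)(t−ε₂)⋯(t−ε_{2r}) = 0}, equipped with the subspace topology of ℝ³, is homeomorphic to the disjoint union of r copies of the two-dimensional sphere S² (e.g. to the product {1,…,r} × S² with the product topology, where {1,…,r} is discrete). -/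
/-- The left endpoint `ε (2k)` of the `k`-th interval. -/
def leftRoot {r : ℕ} (ε : Fin (2 * r) → ℝ) (k : Fin r) : ℝ := ε ⟨2 * k, by omega⟩

/-- The right endpoint `ε (2k+1)` of the `k`-th interval. -/
def rightRoot {r : ℕ} (ε : Fin (2 * r) → ℝ) (k : Fin r) : ℝ := ε ⟨2 * k + 1, by omega⟩

/-- The quotient of `∏ (t - ε i)` by its `k`-th quadratic factor. -/
def cofactor {r : ℕ} (ε : Fin (2 * r) → ℝ) (k : Fin r) (t : ℝ) : ℝ :=
  ∏ j ∈ Finset.univ.erase k, ((t - leftRoot ε j) * (t - rightRoot ε j))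

lemma prod_eq_prod_pairs {r : ℕ} (F : Fin (2 * r) → ℝ) :
    ∏ i, F i = ∏ k : Fin r, (F ⟨2 * k, by omega⟩ * F ⟨2 * k + 1, by omega⟩) := by
  rw [← Equiv.prod_comp ((finProdFinEquiv (m := r) (n := 2)).trans (finCongr (mul_comm r 2))),
    Fintype.prod_prod_type]
  refine Finset.prod_congr rfl fun k _ => ?_
  rw [Fin.prod_univ_two]
  congr 2 <;> ext <;> simp [add_comm]

lemma prod_eq_mul_cofactor {r : ℕ} (ε : Fin (2 * r) → ℝ) (k : Fin r) (t : ℝ) :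
    ∏ i, (t - ε i) = (t - leftRoot ε k) * (t - rightRoot ε k) * cofactor ε k t := by
  rw [prod_eq_prod_pairs, cofactor]
  exact (Finset.mul_prod_erase Finset.univ
    (fun j => (t - leftRoot ε j) * (t - rightRoot ε j)) (Finset.mem_univ k)).symm

lemma leftRoot_lt_rightRoot {r : ℕ} {ε : Fin (2 * r) → ℝ} (hε : StrictMono ε) (k : Fin r) :
    leftRoot ε k < rightRoot ε k :=
  hε (by simp [Fin.lt_def])

lemma rightRoot_lt_leftRoot {r : ℕ} {ε : Fin (2 * r) → ℝ} (hε : StrictMono ε) {j k : Fin r}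
    (h : j < k) : rightRoot ε j < leftRoot ε k :=
  hε (by simp only [Fin.lt_def] at h ⊢; omega)

lemma cofactor_pos {r : ℕ} {ε : Fin (2 * r) → ℝ} (hε : StrictMono ε) {k : Fin r} {t : ℝ}
    (h₁ : leftRoot ε k ≤ t) (h₂ : t ≤ rightRoot ε k) : 0 < cofactor ε k t := by
  refine Finset.prod_pos fun j hj => ?_
  have hlt := leftRoot_lt_rightRoot hε j
  rcases lt_or_gt_of_ne (Finset.ne_of_mem_erase hj) with h | h
  · have := rightRoot_lt_leftRoot hε h
    exact mul_pos (by linarith) (by linarith)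
  · have := rightRoot_lt_leftRoot hε h
    exact mul_pos_of_neg_of_neg (by linarith) (by linarith)

lemma exists_mem_interval {r : ℕ} {ε : Fin (2 * r) → ℝ} (hε : StrictMono ε) {t : ℝ}
    (h : ∏ i, (t - ε i) ≤ 0) : ∃ k, leftRoot ε k ≤ t ∧ t ≤ rightRoot ε k := by
  by_contra! hc
  refine absurd h (not_le.2 ?_)
  rw [prod_eq_prod_pairs]
  refine Finset.prod_pos fun k _ => ?_
  change 0 < (t - leftRoot ε k) * (t - rightRoot ε k)
  have hlt := leftRoot_lt_rightRoot hε k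
  rcases lt_or_ge t (leftRoot ε k) with h' | h'
  · exact mul_pos_of_neg_of_neg (by linarith) (by linarith)
  · have := hc k h'
    exact mul_pos (by linarith) (by linarith)

lemma interval_unique {r : ℕ} {ε : Fin (2 * r) → ℝ} (hε : StrictMono ε) {j k : Fin r} {t : ℝ}
    (hj : leftRoot ε j ≤ t ∧ t ≤ rightRoot ε j) (hk : leftRoot ε k ≤ t ∧ t ≤ rightRoot ε k) :
    j = k := by
  rcases lt_trichotomy j k with h | h | h
  · linarith [rightRoot_lt_leftRoot hε h, hj.2, hk.1]
  · exact h
  · linarith [rightRoot_lt_leftRoot hε h, hj.1, hk.2]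

/-- The affine bijection from `[-1, 1]` onto the `k`-th interval. -/
noncomputable def height {r : ℕ} (ε : Fin (2 * r) → ℝ) (k : Fin r) (w : ℝ) : ℝ :=
  (leftRoot ε k + rightRoot ε k) / 2 + (rightRoot ε k - leftRoot ε k) / 2 * w

/-- The factor `h √(g k t)` by which the horizontal circle of the sphere at height `w` is scaled. -/
noncomputable def scale {r : ℕ} (ε : Fin (2 * r) → ℝ) (k : Fin r) (w : ℝ) : ℝ :=
  (rightRoot ε k - leftRoot ε k) / 2 * √(cofactor ε k (height ε k w))

/-- The parametrization of the surface by `r` spheres, as a map into `ℝ³`. -/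
noncomputable def param {r : ℕ} (ε : Fin (2 * r) → ℝ) (q : Fin r × (ℝ × ℝ × ℝ)) : ℝ × ℝ × ℝ :=
  (scale ε q.1 q.2.2.2 * q.2.1, scale ε q.1 q.2.2.2 * q.2.2.1, height ε q.1 q.2.2.2)

lemma continuous_param {r : ℕ} (ε : Fin (2 * r) → ℝ) : Continuous (param ε) := by
  rw [continuous_prod_of_discrete_left]
  intro k
  have hh : Continuous (height ε k) := by unfold height; fun_prop
  have hg : Continuous (cofactor ε k) := continuous_finsetProd _ fun j _ => by fun_prop
  have hs : Continuous (scale ε k) := by unfold scale; fun_prop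
  change Continuous fun s : ℝ × ℝ × ℝ =>
    (scale ε k s.2.2 * s.1, scale ε k s.2.2 * s.2.1, height ε k s.2.2)
  fun_prop

lemma height_mem {r : ℕ} {ε : Fin (2 * r) → ℝ} (hε : StrictMono ε) (k : Fin r) {w : ℝ}
    (hw : w ^ 2 ≤ 1) : leftRoot ε k ≤ height ε k w ∧ height ε k w ≤ rightRoot ε k := by
  have hlt := leftRoot_lt_rightRoot hε k
  obtain ⟨h₁, h₂⟩ := abs_le.1 ((sq_le_one_iff_abs_le_one w).1 hw)
  unfold height
  constructor <;> nlinarith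

lemma scale_pos {r : ℕ} {ε : Fin (2 * r) → ℝ} (hε : StrictMono ε) (k : Fin r) {w : ℝ}
    (hw : w ^ 2 ≤ 1) : 0 < scale ε k w := by
  have hlt := leftRoot_lt_rightRoot hε k
  obtain ⟨h₁, h₂⟩ := height_mem hε k hw
  exact mul_pos (by linarith) (Real.sqrt_pos.2 (cofactor_pos hε h₁ h₂))

/-- In the coordinate `w` the product becomes `-h² g (1 - w²)`. -/
lemma prod_height {r : ℕ} {ε : Fin (2 * r) → ℝ} (hε : StrictMono ε) (k : Fin r) {w : ℝ}
    (hw : w ^ 2 ≤ 1) : ∏ i, (height ε k w - ε i) = -(scale ε k w ^ 2 * (1 - w ^ 2)) := by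
  obtain ⟨h₁, h₂⟩ := height_mem hε k hw
  rw [prod_eq_mul_cofactor ε k, scale, mul_pow, Real.sq_sqrt (cofactor_pos hε h₁ h₂).le]
  generalize cofactor ε k (height ε k w) = g
  unfold height
  ring

lemma isCompact_unitSphere2 : IsCompact unitSphere2 := by
  refine (isCompact_Icc (a := ((-1, -1, -1) : ℝ × ℝ × ℝ)) (b := (1, 1, 1))).of_isClosed_subset
    (isClosed_eq (by fun_prop) (by fun_prop)) ?_
  rintro ⟨u, v, w⟩ h
  simp only [unitSphere2, Set.mem_ofPred_eq] at h
  simp only [Set.mem_Icc, Prod.mk_le_mk]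
  refine ⟨⟨?_, ?_, ?_⟩, ?_, ?_, ?_⟩ <;> nlinarith [sq_nonneg u, sq_nonneg v, sq_nonneg w]

lemma sq_height_le_one {s : ℝ × ℝ × ℝ} (hs : s ∈ unitSphere2) : s.2.2 ^ 2 ≤ 1 := by
  simp only [unitSphere2, Set.mem_ofPred_eq] at hs
  nlinarith [sq_nonneg s.1, sq_nonneg s.2.1]

/-- For real numbers `ε₁ < ⋯ < ε_{2r}`, the real affine surface
`x² + y² + (t−ε₁)⋯(t−ε_{2r}) = 0` in `ℝ³` is homeomorphic to a disjoint union of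
`r` copies of the sphere `S²`. -/
theorem stmt_7 (r : ℕ) (hr : 1 ≤ r) (ε : Fin (2 * r) → ℝ) (hε : StrictMono ε) :
    Nonempty (({p : ℝ × ℝ × ℝ |
        p.1 ^ 2 + p.2.1 ^ 2 + ∏ i, (p.2.2 - ε i) = 0} : Set (ℝ × ℝ × ℝ)) ≃ₜ
      (Fin r × unitSphere2)) := by
  have : CompactSpace unitSphere2 := isCompact_iff_compactSpace.1 isCompact_unitSphere2
  have hmem : ∀ q : Fin r × unitSphere2, param ε (q.1, q.2) ∈
      {p : ℝ × ℝ × ℝ | p.1 ^ 2 + p.2.1 ^ 2 + ∏ i, (p.2.2 - ε i) = 0} := by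
    rintro ⟨k, ⟨⟨u, v, w⟩, hs⟩⟩
    have hw : w ^ 2 ≤ 1 := sq_height_le_one hs
    simp only [unitSphere2, Set.mem_ofPred_eq] at hs
    simp only [param, Set.mem_ofPred_eq, prod_height hε k hw]
    linear_combination scale ε k w ^ 2 * hs
  let φ : Fin r × unitSphere2 → {p : ℝ × ℝ × ℝ |
      p.1 ^ 2 + p.2.1 ^ 2 + ∏ i, (p.2.2 - ε i) = 0} := fun q => ⟨param ε (q.1, q.2), hmem q⟩
  have hcont : Continuous φ :=
    ((continuous_param ε).comp (by fun_prop)).subtype_mk hmem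
  have hinj : Function.Injective φ := by
    rintro ⟨k, ⟨⟨u, v, w⟩, hs⟩⟩ ⟨k', ⟨⟨u', v', w'⟩, hs'⟩⟩ h
    have hw : w ^ 2 ≤ 1 := sq_height_le_one hs
    have hw' : w' ^ 2 ≤ 1 := sq_height_le_one hs'
    have h := congrArg Subtype.val h
    simp only [φ, param, Prod.mk.injEq] at h
    obtain ⟨hu, hv, ht⟩ := h
    obtain rfl : k = k' := interval_unique hε (height_mem hε k hw) (ht ▸ height_mem hε k' hw')
    have hlt := leftRoot_lt_rightRoot hε k
    obtain rfl : w = w' := by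
      unfold height at ht
      exact mul_left_cancel₀ (by linarith : (rightRoot ε k - leftRoot ε k) / 2 ≠ 0)
        (add_left_cancel ht)
    have hne := (scale_pos hε k hw).ne'
    obtain rfl := mul_left_cancel₀ hne hu
    obtain rfl := mul_left_cancel₀ hne hv
    rfl
  have hsurj : Function.Surjective φ := by
    rintro ⟨⟨x, y, t⟩, hp⟩
    simp only [Set.mem_ofPred_eq] at hp
    obtain ⟨k, h₁, h₂⟩ := exists_mem_interval hε (t := t) (by nlinarith [sq_nonneg x, sq_nonneg y])
    have hlt := leftRoot_lt_rightRoot hε k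
    have hd : 0 < (rightRoot ε k - leftRoot ε k) / 2 := by linarith
    obtain ⟨w, rfl⟩ : ∃ w, height ε k w = t :=
      ⟨(t - (leftRoot ε k + rightRoot ε k) / 2) / ((rightRoot ε k - leftRoot ε k) / 2), by
        rw [height, mul_div_cancel₀ _ hd.ne']; ring⟩
    have hw : w ^ 2 ≤ 1 := by
      unfold height at h₁ h₂
      rw [sq_le_one_iff_abs_le_one, abs_le]
      constructor <;> by_contra! hc <;> nlinarith [mul_pos hd (sub_pos.2 hc)]
    have hpos := scale_pos hε k hw
    rw [prod_height hε k hw] at hp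
    refine ⟨(k, ⟨(x / scale ε k w, y / scale ε k w, w), ?_⟩), ?_⟩
    · simp only [unitSphere2, Set.mem_ofPred_eq]
      field_simp
      linarith
    · apply Subtype.ext
      simp only [φ, param, mul_div_cancel₀ _ hpos.ne']
  exact ⟨(hcont.homeoOfEquivCompactToT2 (f := Equiv.ofBijective φ ⟨hinj, hsurj⟩)).symm⟩
end
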